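/- Let A be a finite alphabet, let σ be a morphism on a finite alphabet B with an iterative fixed point x generated from a letter b such that every letter of B occurs in x, and let a = (a_n)_{n ≥ 0} = τ(x) be the image of x under a non-erasing morphism τ : B → A* (τ maps no letter to the empty word, and a is the concatenation τ(x_0)τ(x_1)τ(x_2)⋯). Let α be the dominant eigenvalue (spectral radius) of the adjacency matrix of σ. If a is q-automatic for some integer q ≥ 2 and a is not eventually periodic, then α and q are multiplicatively dependent: there exist positive integers s and t with α^s = q^t. -/

import Mathlib

/-!
Suppose that `α` and `q` are multiplicatively independent; then `a` is shown to be eventually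
periodic. Write `W n c` for the word `τ (σ ^ n (c))`, so that, for every `n`, the sequence `a` is
the concatenation of the words `W n (x k)`, `k ≥ 0`.

*Lengths.* The lengths of the words `W n c` are the entries of the `n`-th iterate of a vector under
the transposed adjacency matrix. Since `σ (x 0)` starts with `x 0`, this matrix has nonzero trace,
hence `α > 0`. Decomposing along generalized eigenspaces, the iterates are asymptotic to
`C(n, d) α ^ n` times an almost periodic sequence of nonnegative vectors, which is an orbit of the
transposed matrix divided by `α`. A recurrent nonnegative vector of a nonnegative linear map is
periodic (`exists_periodic_of_recurrent`), so after replacing `σ` by a power `σ ^ h` the quotients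
`|W n c| / |W n (x 0)|` converge, and `|W (n + 1) (x 0)| / |W n (x 0)|` tends to `α ^ h ≥ 1`
(`exists_scaled_lengths`).

*Ratio one* (`eventuallyPeriodic_of_ratio_one`). Growth is then subexponential, so some growing
letter has a single growing letter in each of its iterated images; this produces arbitrarily high
powers of a fixed word, and so arbitrarily long runs of a fixed period `P` in `a`. By automaticity
such runs of length `2 * q ^ m` also start at some `q ^ m * z` with `z` bounded. As the ratio tends
to `1`, for any `r` such a run contains the whole segment of `a` between the ends of `W n (x 0)` and
`W (n + r) (x 0)`, for suitable `n`. Whether such a segment has period `P` depends on `n` only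
through finite data that repeat periodically with `n`, so that these segments are `P`-periodic for
one and the same `n` and all `r`.

*Ratio larger than one* (`eventuallyPeriodic_of_geometric`). Independence makes the quotients
`q ^ m / |W n (x 0)|` dense in the positive reals. By automaticity, every window of two consecutive
blocks of size `q ^ m` far enough to the right is repeated near points `q ^ (m + H * e) * ξ` with
`ξ` in a finite set (`exists_anchor_points`), and `n` and `m` can be chosen such that these
repetitions lie inside words `W n c` whose letter `c` recurs in `x`. The other occurrences of `c`
yield many occurrences of this word whose positions are almost, but not exactly, congruent modulo
`q ^ (m + 2)`. Two of them are covered by blocks with the same words, read with a small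
relative shift, so the window has a period at most `q ^ m / 2`
(`exists_locPer_of_occurrences`). By the Fine-Wilf theorem the minimal periods of overlapping windows
agree, so `a` is eventually periodic (`eventuallyPeriodic_of_windows`).
-/

/-- A sequence `a : ℕ → A` is `q`-automatic if its `q`-kernel, the set of
subsequences `n ↦ a (q^k * n + r)` with `k ≥ 0` and `0 ≤ r < q^k`, is finite. -/
def IsQAutomatic {A : Type*} (q : ℕ) (a : ℕ → A) : Prop :=
  {s : ℕ → A | ∃ k r : ℕ, r < q ^ k ∧ s = fun n => a (q ^ k * n + r)}.Finite

/-- The extension of a morphism `σ : B → B*` to finite words, by concatenation. -/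
def wordApply {B : Type*} (σ : B → List B) (w : List B) : List B := w.flatMap σ

/-! ### Local periods -/

/-- `LocPer a s L P`: the factor of `a` of length `L` starting at position `s` has period `P`. -/
def LocPer {A : Type*} (a : ℕ → A) (s L P : ℕ) : Prop :=
  ∀ v, s ≤ v → v + P < s + L → a (v + P) = a v

lemma LocPer.mono {A : Type*} {a : ℕ → A} {s L P s' L' : ℕ} (h : LocPer a s L P)
    (h1 : s ≤ s') (h2 : s' + L' ≤ s + L) : LocPer a s' L' P :=
  fun v hv hv' => h v (by omega) (by omega)

lemma locPer_iff_hasPeriod {A : Type*} (a : ℕ → A) (s L P : ℕ) :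
    LocPer a s L P ↔ ((List.range L).map (fun i => a (s + i))).HasPeriod P := by
  rw [List.hasPeriod_iff_getElem?]
  constructor
  · intro h i hi
    simp only [List.length_map, List.length_range] at hi
    have h1 : i < L := by omega
    have h2 : i + P < L := by omega
    simp only [List.getElem?_map, List.getElem?_range h1, List.getElem?_range h2, Option.map_some]
    have := h (s + i) (by omega) (by omega)
    rw [← this]; congr 2; omega
  · intro h v hv hv'
    have h1 : v - s < L := by omega
    have h2 : v - s + P < L := by omega
    have := h (v - s) (by simp only [List.length_map, List.length_range]; omega)
    simp only [List.getElem?_map, List.getElem?_range h1, List.getElem?_range h2, Option.map_some,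
      Option.some.injEq] at this
    rw [show s + (v - s) = v by omega, show s + (v - s + P) = v + P by omega] at this
    exact this.symm

lemma LocPer.gcd {A : Type*} {a : ℕ → A} {s L P R : ℕ} (h1 : LocPer a s L P)
    (h2 : LocPer a s L R) (h : P + R ≤ L) : LocPer a s L (P.gcd R) := by
  rw [locPer_iff_hasPeriod] at *
  exact h1.gcd h2 (by simp only [List.length_map, List.length_range]; omega)

lemma LocPer.iterate {A : Type*} {a : ℕ → A} {s L P : ℕ} (h : LocPer a s L P) (k v : ℕ)
    (hv : s ≤ v) (hv' : v + k * P < s + L) : a (v + k * P) = a v := by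
  induction k with
  | zero => simp
  | succ k ih =>
    have e : v + (k + 1) * P = v + k * P + P := by ring
    rw [e] at hv' ⊢
    rw [h _ (by omega) hv', ih (by omega)]

/-- Two positions of a `P`-periodic factor which are congruent modulo `P` carry the same letter. -/
lemma LocPer.eq_of_modEq {A : Type*} {a : ℕ → A} {s L P : ℕ} (h : LocPer a s L P) {v w : ℕ}
    (hv : s ≤ v) (hv' : v < s + L) (hw : s ≤ w) (hw' : w < s + L) (hvw : v ≡ w [MOD P]) :
    a v = a w := by
  wlog hle : v ≤ w generalizing v w
  · exact (this hw hw' hv hv' hvw.symm (by omega)).symm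
  obtain ⟨k, hk⟩ := (Nat.modEq_iff_dvd' hle).1 hvw
  have e : w = v + k * P := by rw [mul_comm k P, ← hk]; omega
  subst e
  exact (h.iterate k v hv hw').symm

/-- A period of a long enough subfactor that divides a period of the whole factor is a period of
the whole factor. -/
lemma LocPer.extend {A : Type*} {a : ℕ → A} {s L P s' L' d : ℕ} (h : LocPer a s L P)
    (hP : 0 < P) (hsub : s ≤ s') (hsub' : s' + L' ≤ s + L) (hL' : P ≤ L')
    (h' : LocPer a s' L' d) (hd : d ∣ P) : LocPer a s L d := by
  intro v hv hv'
  have key : ∀ w, ∃ w', s' ≤ w' ∧ w' < s' + P ∧ w' ≡ w [MOD P] := by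
    intro w
    have h3 : (w + s' * P - s') % P < P := Nat.mod_lt _ hP
    refine ⟨s' + (w + s' * P - s') % P, by omega, by omega, ?_⟩
    have h1 : s' ≤ s' * P := Nat.le_mul_of_pos_right _ hP
    have h2 : s' + (w + s' * P - s') % P ≡ s' + (w + s' * P - s') [MOD P] :=
      (Nat.ModEq.refl _).add (Nat.mod_modEq _ _)
    rw [show s' + (w + s' * P - s') = w + s' * P by omega] at h2
    exact h2.trans (by simp [Nat.ModEq])
  obtain ⟨w1, a1, a2, a3⟩ := key v
  obtain ⟨w2, b1, b2, b3⟩ := key (v + d)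
  rw [← h.eq_of_modEq (by omega) (by omega) (by omega) (by omega) a3,
    ← h.eq_of_modEq (by omega) (by omega) (by omega) (by omega) b3]
  refine h'.eq_of_modEq (by omega) (by omega) (by omega) (by omega) ?_
  have c1 : w2 ≡ v + d [MOD d] := b3.of_dvd hd
  have c2 : w1 ≡ v [MOD d] := a3.of_dvd hd
  exact c1.trans ((by simp [Nat.ModEq] : v + d ≡ v [MOD d]).trans c2.symm)

/-- If every window of two consecutive blocks of length `b` far enough to the right has a period at
most `b / 2`, then by the Fine-Wilf theorem the minimal periods of these windows all agree, so the
sequence is eventually periodic. -/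
lemma eventuallyPeriodic_of_windows {A : Type*} (a : ℕ → A) (b Z : ℕ) (hb : 0 < b)
    (h : ∀ z ≥ Z, ∃ P, 0 < P ∧ 2 * P ≤ b ∧ LocPer a (b * z) (2 * b) P) :
    ∃ N P : ℕ, 0 < P ∧ ∀ n ≥ N, a (n + P) = a n := by
  classical
  let mp : ℕ → ℕ := fun z => sInf {P | 0 < P ∧ LocPer a (b * z) (2 * b) P}
  have hmem : ∀ z ≥ Z, mp z ∈ {P | 0 < P ∧ LocPer a (b * z) (2 * b) P} := fun z hz => by
    obtain ⟨P, h1, _, h3⟩ := h z hz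
    exact Nat.sInf_mem ⟨P, h1, h3⟩
  have hle : ∀ z ≥ Z, 2 * mp z ≤ b := fun z hz => by
    obtain ⟨P, h1, h2, h3⟩ := h z hz
    have : mp z ≤ P := Nat.sInf_le ⟨h1, h3⟩
    omega
  have hstep : ∀ z ≥ Z, mp (z + 1) = mp z := by
    intro z hz
    obtain ⟨p1, q1⟩ := hmem z hz
    obtain ⟨p2, q2⟩ := hmem (z + 1) (by omega)
    have l1 := hle z hz
    have l2 := hle (z + 1) (by omega)
    have e : b * (z + 1) = b * z + b := by ring
    have g := (q1.mono (s' := b * (z + 1)) (L' := b) (by omega) (by omega)).gcd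
      (q2.mono (s' := b * (z + 1)) (L' := b) (by omega) (by omega)) (by omega)
    have gp : 0 < (mp z).gcd (mp (z + 1)) := Nat.gcd_pos_of_pos_left _ p1
    have e1 : mp z ≤ (mp z).gcd (mp (z + 1)) := Nat.sInf_le ⟨gp,
      q1.extend p1 (by omega) (by omega) (by omega) g (Nat.gcd_dvd_left _ _)⟩
    have e2 : mp (z + 1) ≤ (mp z).gcd (mp (z + 1)) := Nat.sInf_le ⟨gp,
      q2.extend p2 le_rfl (by omega) (by omega) g (Nat.gcd_dvd_right _ _)⟩
    have e3 := Nat.le_of_dvd p1 (Nat.gcd_dvd_left (mp z) (mp (z + 1)))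
    have e4 := Nat.le_of_dvd p2 (Nat.gcd_dvd_right (mp z) (mp (z + 1)))
    omega
  have hconst : ∀ z ≥ Z, mp z = mp Z := by
    intro z hz
    induction z, hz using Nat.le_induction with
    | base => rfl
    | succ z hz ih => rw [hstep z hz, ih]
  refine ⟨b * Z, mp Z, (hmem Z le_rfl).1, fun n hn => ?_⟩
  have hz : Z ≤ n / b := (Nat.le_div_iff_mul_le hb).2 (by rw [mul_comm]; exact hn)
  have q := (hmem (n / b) hz).2
  have l := hle (n / b) hz
  rw [hconst _ hz] at q l
  have h1 := Nat.div_add_mod n b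
  have h2 := Nat.mod_lt n hb
  exact q n (by omega) (by omega)

/-! ### Block types of an automatic sequence -/

/-- A `q`-automatic sequence admits a finite colouring `ty` of `ℕ` such that the colour of `z`
determines, for every `m`, the word read on the two consecutive blocks
`[q ^ m * z, q ^ m * (z + 2))`, as well as the colours of all `q ^ m * z + j` with `j < q ^ m`. -/
lemma exists_types {A : Type*} [Fintype A] {q : ℕ} (hq : 2 ≤ q) {a : ℕ → A}
    (haut : IsQAutomatic q a) :
    ∃ (T : ℕ) (ty : ℕ → Fin T),
      (∀ z z', ty z = ty z' → ∀ m i, i < 2 * q ^ m → a (q ^ m * z + i) = a (q ^ m * z' + i)) ∧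
      (∀ z z', ty z = ty z' → ∀ m j, j < q ^ m → ty (q ^ m * z + j) = ty (q ^ m * z' + j)) := by
  classical
  unfold IsQAutomatic at haut
  set K := {s : ℕ → A | ∃ k r : ℕ, r < q ^ k ∧ s = fun n => a (q ^ k * n + r)} with hK
  have : Finite K := haut
  let κ : ℕ → K → A := fun z s => s.1 z
  let ty0 : ℕ → (K → A) × (K → A) := fun z => (κ z, κ (z + 1))
  have hblock : ∀ z z', κ z = κ z' → ∀ m i, i < q ^ m →
      a (q ^ m * z + i) = a (q ^ m * z' + i) := by
    intro z z' h m i hi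
    exact congrFun h ⟨fun n => a (q ^ m * n + i), m, i, hi, rfl⟩
  have hκ : ∀ z z', κ z = κ z' → ∀ j < q, κ (q * z + j) = κ (q * z' + j) := by
    intro z z' h j hj
    funext ⟨s, k, r, hr, hs⟩
    have key : ∀ n, s (q * n + j) = a (q ^ (k + 1) * n + (q ^ k * j + r)) := by
      intro n
      rw [hs]
      change a _ = a _
      congr 1
      ring
    change s (q * z + j) = s (q * z' + j)
    rw [key, key]
    refine hblock z z' h _ _ ?_
    have : q ^ k * (j + 1) ≤ q ^ k * q := Nat.mul_le_mul_left _ hj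
    rw [pow_succ]
    nlinarith
  obtain ⟨T, ⟨eqv⟩⟩ := Finite.exists_equiv_fin ((K → A) × (K → A))
  have hty : ∀ z z', eqv (ty0 z) = eqv (ty0 z') ↔ κ z = κ z' ∧ κ (z + 1) = κ (z' + 1) := by
    intro z z'
    rw [eqv.apply_eq_iff_eq, Prod.ext_iff]
  have hone : ∀ z z', eqv (ty0 z) = eqv (ty0 z') → ∀ j < q,
      eqv (ty0 (q * z + j)) = eqv (ty0 (q * z' + j)) := by
    intro z z' h j hj
    rw [hty] at h ⊢
    refine ⟨hκ _ _ h.1 j hj, ?_⟩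
    by_cases hj' : j + 1 < q
    · exact hκ _ _ h.1 (j + 1) hj'
    · have e : ∀ w, q * w + j + 1 = q * (w + 1) + 0 := fun w => by
        have : j + 1 = q := by omega
        rw [add_assoc, this]; ring
      rw [e, e]
      exact hκ _ _ h.2 0 (by omega)
  refine ⟨T, fun z => eqv (ty0 z), ?_, ?_⟩
  · intro z z' h m i hi
    rw [hty] at h
    by_cases hi' : i < q ^ m
    · exact hblock z z' h.1 m i hi'
    · have e : ∀ w, q ^ m * w + i = q ^ m * (w + 1) + (i - q ^ m) := fun w => by
        rw [mul_add, mul_one]; omega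
      rw [e, e]
      exact hblock _ _ h.2 m _ (by omega)
  · intro z z' h m
    induction m with
    | zero =>
      intro j hj
      have : j = 0 := by simpa using hj
      subst this
      simpa using h
    | succ m ih =>
      intro j hj
      have hq0 : 0 < q := by omega
      have e : ∀ w, q ^ (m + 1) * w + j = q * (q ^ m * w + j / q) + j % q := fun w => by
        have := Nat.div_add_mod j q
        calc q ^ (m + 1) * w + j = q * (q ^ m * w) + j := by ring
          _ = q * (q ^ m * w) + (q * (j / q) + j % q) := by rw [this]
          _ = _ := by ring
      rw [e, e]
      exact hone _ _ (ih _ (by rw [Nat.div_lt_iff_lt_mul hq0, ← pow_succ]; exact hj)) _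
        (Nat.mod_lt _ hq0)

/-- Iterating a return `w ↦ q ^ b * w + j` to the type of `w` produces occurrences of that type
within distance `1` of `q ^ (b * i) * ζ`, where `ζ = w + j / (q ^ b - 1)`. -/
lemma exists_iterate_type {q T : ℕ} (hq : 2 ≤ q) (ty : ℕ → Fin T)
    (hty : ∀ z z', ty z = ty z' → ∀ m j, j < q ^ m → ty (q ^ m * z + j) = ty (q ^ m * z' + j))
    (w b j : ℕ) (hb : 1 ≤ b) (hj : j < q ^ b) (hw : ty (q ^ b * w + j) = ty w) (i : ℕ) :
    ∃ w', ty w' = ty w ∧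
      |(w' : ℝ) - (q : ℝ) ^ (b * i) * (w + j / ((q : ℝ) ^ b - 1))| ≤ 1 := by
  have hqb : 1 < (q : ℝ) ^ b := one_lt_pow₀ (by exact_mod_cast hq) (by omega)
  set c : ℝ := j / ((q : ℝ) ^ b - 1) with hc
  have hc' : c * ((q : ℝ) ^ b - 1) = j := by rw [hc]; field_simp [(by linarith : (q : ℝ) ^ b - 1 ≠ 0)]
  have hc0 : 0 ≤ c := div_nonneg (by positivity) (by linarith)
  have hc1 : c ≤ 1 := by
    rw [hc, div_le_one (by linarith)]
    have : (j : ℝ) + 1 ≤ (q : ℝ) ^ b := by exact_mod_cast hj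
    linarith
  have : ∃ w', ty w' = ty w ∧ (w' : ℝ) = (q : ℝ) ^ (b * i) * (w + c) - c := by
    induction i with
    | zero => exact ⟨w, rfl, by simp⟩
    | succ i ih =>
      obtain ⟨w', h1, h2⟩ := ih
      refine ⟨q ^ b * w' + j, (hty _ _ h1 b j hj).trans hw, ?_⟩
      push_cast
      rw [h2, ← hc', show b * (i + 1) = b + b * i by ring, pow_add]
      ring
  obtain ⟨w', h1, h2⟩ := this
  refine ⟨w', h1, ?_⟩
  rw [h2, abs_le]
  constructor <;> linarith

/-- For `z` large, the window of two consecutive blocks of size `q ^ m` starting at `q ^ m * z` is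
repeated near `q ^ (m + H * e) * ξ` for every `e`. The positive real `ξ` depends on `z` only, and
takes finitely many values. -/
lemma exists_anchor_points {A : Type*} [Fintype A] {q : ℕ} (hq : 2 ≤ q) {a : ℕ → A}
    (haut : IsQAutomatic q a) :
    ∃ (Ξ : Set ℝ) (H : ℕ) (G : ℝ) (Z : ℕ), Ξ.Finite ∧ (∀ ξ ∈ Ξ, 0 < ξ) ∧ 0 < H ∧ 0 < G ∧
      ∀ z ≥ Z, ∃ ξ ∈ Ξ, ∀ m e : ℕ, ∃ p : ℕ, |(p : ℝ) - (q : ℝ) ^ (m + H * e) * ξ| ≤ G * q ^ m ∧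
        ∀ i < 2 * q ^ m, a (q ^ m * z + i) = a (p + i) := by
  classical
  obtain ⟨T, ty, hblock, hty⟩ := exists_types hq haut
  have hq0 : 0 < q := by omega
  let valid : Fin T × Fin (T + 1) × Fin (q ^ T) × Fin (T + 1) → ℕ → Prop := fun d w =>
    1 ≤ w ∧ ty w = d.1 ∧ ty (q ^ (d.2.1 : ℕ) * w + d.2.2.1) = d.1 ∧ 1 ≤ (d.2.1 : ℕ) ∧
      (d.2.2.1 : ℕ) < q ^ (d.2.1 : ℕ)
  let D := {d : Fin T × Fin (T + 1) × Fin (q ^ T) × Fin (T + 1) // ∃ w, valid d w}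
  let rep : D → ℕ := fun d => Classical.choose d.2
  have hrep : ∀ d : D, valid d.1 (rep d) := fun d => Classical.choose_spec d.2
  let ζ : D → ℝ := fun d => rep d + (d.1.2.2.1 : ℕ) / ((q : ℝ) ^ (d.1.2.1 : ℕ) - 1)
  let ξ : D → ℝ := fun d => (q : ℝ) ^ (d.1.2.2.2 : ℕ) * ζ d
  refine ⟨Set.range ξ, T.factorial, 2 * q ^ T, q ^ T, Set.finite_range _, ?_,
    Nat.factorial_pos _, by positivity, ?_⟩
  · rintro _ ⟨d, rfl⟩
    have h1 : (1 : ℝ) ≤ rep d := by exact_mod_cast (hrep d).1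
    have hqb : 1 ≤ (q : ℝ) ^ (d.1.2.1 : ℕ) := one_le_pow₀ (by exact_mod_cast hq0)
    have : 0 ≤ ((d.1.2.2.1 : ℕ) : ℝ) / ((q : ℝ) ^ (d.1.2.1 : ℕ) - 1) :=
      div_nonneg (by positivity) (by linarith)
    have : 0 < ζ d := by simp only [ζ]; linarith
    positivity
  intro z hz
  -- Two of the `T + 1` numbers obtained by deleting at most `T` digits of `z` have the same type.
  obtain ⟨r, r', hrr, htr⟩ : ∃ r r' : Fin (T + 1), (r : ℕ) < r' ∧
      ty (z / q ^ (r : ℕ)) = ty (z / q ^ (r' : ℕ)) := by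
    obtain ⟨r, r', hne, heq⟩ := Fintype.exists_ne_map_eq_of_card_lt
      (fun r : Fin (T + 1) => ty (z / q ^ (r : ℕ))) (by simp)
    rcases lt_or_gt_of_ne hne with h | h
    · exact ⟨r, r', h, heq⟩
    · exact ⟨r', r, h, heq.symm⟩
  set w := z / q ^ (r' : ℕ) with hw
  set b := (r' : ℕ) - r with hb
  set j := (z / q ^ (r : ℕ)) % q ^ b with hj
  have hzr : z / q ^ (r : ℕ) = q ^ b * w + j := by
    have : z / q ^ (r' : ℕ) = (z / q ^ (r : ℕ)) / q ^ b := by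
      rw [Nat.div_div_eq_div_mul, ← pow_add]
      congr 2; omega
    rw [hw, this, hj, Nat.div_add_mod]
  have hjb : j < q ^ b := Nat.mod_lt _ (by positivity)
  have hbT : b < T + 1 := by omega
  have hjT : j < q ^ T := hjb.trans_le (Nat.pow_le_pow_right hq0 (by omega))
  have hw1 : 1 ≤ w := by
    rw [hw, Nat.le_div_iff_mul_le (by positivity), one_mul]
    exact (Nat.pow_le_pow_right hq0 (by omega)).trans hz
  let d0 : Fin T × Fin (T + 1) × Fin (q ^ T) × Fin (T + 1) := (ty w, ⟨b, hbT⟩, ⟨j, hjT⟩, r)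
  have hv : valid d0 w := ⟨hw1, rfl, by change ty (q ^ b * w + j) = ty w; rw [← hzr, htr],
    by change 1 ≤ b; omega, hjb⟩
  let d : D := ⟨d0, w, hv⟩
  refine ⟨ξ d, ⟨d, rfl⟩, fun m e => ?_⟩
  obtain ⟨v1, v2, v3, v4, v5⟩ := hrep d
  change ty (rep d) = ty w at v2
  change ty (q ^ b * rep d + j) = ty w at v3
  change 1 ≤ b at v4
  obtain ⟨f, hf⟩ : b ∣ T.factorial := Nat.dvd_factorial (by omega) (by omega)
  obtain ⟨w', g1, g2⟩ := exists_iterate_type hq ty hty (rep d) b j v4 hjb (by rw [v3, v2]) (f * e)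
  have hξ : ξ d = (q : ℝ) ^ (r : ℕ) * ((rep d : ℝ) + j / ((q : ℝ) ^ b - 1)) := rfl
  set ρ := z % q ^ (r : ℕ) with hρ
  have hρ' : ρ < q ^ (r : ℕ) := Nat.mod_lt _ (by positivity)
  have hz' : z = q ^ (r : ℕ) * (z / q ^ (r : ℕ)) + ρ := (Nat.div_add_mod _ _).symm
  have hrT : (q : ℝ) ^ (r : ℕ) ≤ (q : ℝ) ^ T :=
    pow_le_pow_right₀ (by exact_mod_cast hq0) (by omega)
  refine ⟨q ^ (m + r) * w' + q ^ m * ρ, ?_, ?_⟩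
  · rw [hξ, hf, mul_assoc]
    push_cast
    have e1 : (q : ℝ) ^ (m + (r : ℕ)) * w' + (q : ℝ) ^ m * ρ
        - (q : ℝ) ^ (m + b * (f * e)) * ((q : ℝ) ^ (r : ℕ) * ((rep d : ℝ) + j / ((q : ℝ) ^ b - 1)))
        = (q : ℝ) ^ m * ((q : ℝ) ^ (r : ℕ) * ((w' : ℝ) - (q : ℝ) ^ (b * (f * e)) *
          ((rep d : ℝ) + j / ((q : ℝ) ^ b - 1))) + ρ) := by
      rw [pow_add, pow_add]; ring
    rw [e1, abs_mul, abs_of_nonneg (by positivity : (0 : ℝ) ≤ (q : ℝ) ^ m), mul_comm]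
    refine mul_le_mul_of_nonneg_right ?_ (by positivity)
    refine (abs_add_le _ _).trans ?_
    rw [abs_mul, abs_of_nonneg (by positivity : (0 : ℝ) ≤ (q : ℝ) ^ (r : ℕ)),
      abs_of_nonneg (by positivity : (0 : ℝ) ≤ (ρ : ℝ))]
    have h1 : (ρ : ℝ) ≤ (q : ℝ) ^ (r : ℕ) := by exact_mod_cast hρ'.le
    have h2 := mul_le_mul_of_nonneg_left g2 (by positivity : (0 : ℝ) ≤ (q : ℝ) ^ (r : ℕ))
    linarith
  · intro i hi
    have h1 : q ^ m * z + i = q ^ (m + r) * (z / q ^ (r : ℕ)) + (q ^ m * ρ + i) := by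
      conv_lhs => rw [hz']
      rw [pow_add]; ring
    have h2 : ty (z / q ^ (r : ℕ)) = ty w' := by rw [htr, g1, v2]
    rw [h1, hblock _ _ h2 (m + r) (q ^ m * ρ + i) ?_, add_assoc]
    have : q ^ m * (ρ + 1) ≤ q ^ m * q ^ (r : ℕ) := Nat.mul_le_mul_left _ hρ'
    have h3 : 1 ≤ q ^ (r : ℕ) := Nat.one_le_pow _ _ hq0
    rw [pow_add]
    nlinarith

/-! ### Simultaneous and inhomogeneous Diophantine approximation -/

/-- Bohr's lemma: the set of `t` for which all `δ i * t` are close to integers is relatively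
dense. -/
lemma exists_near_int_window {ι : Type*} [Finite ι] (δ : ι → ℝ) {ε : ℝ} (hε : 0 < ε) :
    ∃ Γ > 0, ∀ X : ℝ, ∃ t, X ≤ t ∧ t ≤ X + Γ ∧ ∃ e : ι → ℤ, ∀ i, |δ i * t - e i| < ε := by
  classical
  obtain ⟨K, hK⟩ := exists_nat_gt (1 / ε)
  have hK0 : (0 : ℝ) < K := lt_trans (by positivity) hK
  have hKε : 1 / (K : ℝ) < ε := by
    rw [div_lt_iff₀ hK0]; rw [div_lt_iff₀ hε] at hK; linarith
  let col : ℝ → ι → Fin (K + 1) := fun t i =>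
    ⟨⌊K * Int.fract (δ i * t)⌋₊, by
      have h1 := Int.fract_lt_one (δ i * t)
      have h2 := Int.fract_nonneg (δ i * t)
      have : K * Int.fract (δ i * t) < (K : ℝ) + 1 := by nlinarith
      rw [Nat.floor_lt (by positivity)]
      exact_mod_cast this⟩
  have hcol : ∀ t s, col t = col s → ∀ i, ∃ e : ℤ, |δ i * (t - s) - e| < ε := by
    intro t s h i
    refine ⟨⌊δ i * t⌋ - ⌊δ i * s⌋, ?_⟩
    have h1 : ⌊K * Int.fract (δ i * t)⌋₊ = ⌊K * Int.fract (δ i * s)⌋₊ := by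
      simpa [col, Fin.ext_iff] using congrFun h i
    have e1 := Nat.floor_le (mul_nonneg hK0.le (Int.fract_nonneg (δ i * t)))
    have e2 := Nat.lt_floor_add_one (K * Int.fract (δ i * t))
    have e3 := Nat.floor_le (mul_nonneg hK0.le (Int.fract_nonneg (δ i * s)))
    have e4 := Nat.lt_floor_add_one (K * Int.fract (δ i * s))
    rw [h1] at e1 e2
    have h3 : |K * Int.fract (δ i * t) - K * Int.fract (δ i * s)| < 1 := by
      rw [abs_lt]; constructor <;> linarith
    rw [← mul_sub, abs_mul, abs_of_pos hK0] at h3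
    have h4 : |Int.fract (δ i * t) - Int.fract (δ i * s)| < ε := by
      have : |Int.fract (δ i * t) - Int.fract (δ i * s)| < 1 / K := by
        rw [lt_div_iff₀ hK0]; linarith
      linarith
    convert h4 using 2
    push_cast
    rw [← Int.self_sub_floor, ← Int.self_sub_floor]
    ring
  let R : Set.range col → ℝ := fun c => Classical.choose c.2
  have hR : ∀ c, col (R c) = c.1 := fun c => Classical.choose_spec c.2
  obtain ⟨S, hS⟩ : ∃ S, ∀ c, |R c| ≤ S := by
    obtain ⟨S, hS⟩ := (Set.finite_range (fun c => |R c|)).bddAbove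
    exact ⟨S, fun c => hS ⟨c, rfl⟩⟩
  have hS0 : 0 ≤ S := (abs_nonneg _).trans (hS ⟨col 0, 0, rfl⟩)
  refine ⟨2 * S + 1, by linarith, fun X => ?_⟩
  let c : Set.range col := ⟨col (X + S), X + S, rfl⟩
  have hc := abs_le.1 (hS c)
  have := hcol (X + S) (R c) (hR c).symm
  choose e he using this
  exact ⟨X + S - R c, by linarith, by linarith, e, he⟩

/-- For irrational `β`, boundedly many of the translates `u + j * β`, `j ≥ 0`, suffice to come
close to an integer, uniformly in `u`. -/
lemma exists_finset_near_int {β : ℝ} (hβ : Irrational β) {ε : ℝ} (hε : 0 < ε) :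
    ∃ J : Finset ℕ, ∀ u : ℝ, ∃ j ∈ J, ∃ e : ℤ, |u + j * β - e| < ε := by
  classical
  obtain ⟨K, hK⟩ := exists_nat_gt (2 / ε)
  have hK0 : (0 : ℝ) < K := lt_trans (by positivity) hK
  have hKε : 2 / (K : ℝ) < ε := by
    rw [div_lt_iff₀ hK0]; rw [div_lt_iff₀ hε] at hK; linarith
  have hd : Dense (AddSubgroup.closure {β, (1 : ℝ)} : Set ℝ) := by
    rw [dense_addSubgroupClosure_pair_iff]; simpa using hβ
  have : ∀ r : Fin (K + 1), ∃ j p : ℤ, |j * β + p + r / K| < 1 / K := by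
    intro r
    obtain ⟨y, hy, hy'⟩ := hd.exists_dist_lt (-(r / K : ℝ)) (show 0 < 1 / (K : ℝ) by positivity)
    obtain ⟨j, p, rfl⟩ := AddSubgroup.mem_closure_pair.1 hy
    refine ⟨j, p, ?_⟩
    rw [dist_comm, Real.dist_eq] at hy'
    simpa using hy'
  choose j p hjp using this
  obtain ⟨N, hN⟩ : ∃ N : ℕ, ∀ r, -(N : ℤ) ≤ j r := by
    obtain ⟨S, hS⟩ := (Set.finite_range (fun c => (j c).natAbs)).bddAbove
    refine ⟨S, fun c => ?_⟩
    have : (j c).natAbs ≤ S := hS ⟨c, rfl⟩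
    omega
  refine ⟨Finset.univ.image (fun r => (j r + N).toNat), fun u => ?_⟩
  set f := Int.fract (u + N * β) with hf
  have f0 := Int.fract_nonneg (u + N * β)
  have f1 := Int.fract_lt_one (u + N * β)
  have hr : ⌊K * f⌋₊ < K + 1 := by
    rw [Nat.floor_lt (by positivity)]; push_cast; nlinarith
  have e1 := Nat.floor_le (mul_nonneg hK0.le f0)
  have e2 := Nat.lt_floor_add_one (K * f)
  let r : Fin (K + 1) := ⟨⌊K * f⌋₊, hr⟩
  refine ⟨(j r + N).toNat, Finset.mem_image_of_mem _ (Finset.mem_univ _),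
    ⌊u + N * β⌋ - p r, ?_⟩
  have hc : (((j r + N).toNat : ℕ) : ℝ) = j r + N := by
    have : ((j r + N).toNat : ℤ) = j r + N := Int.toNat_of_nonneg (by linarith [hN r])
    exact_mod_cast this
  have e3 : |f - (⌊K * f⌋₊ : ℝ) / K| ≤ 1 / K := by
    have h : f - (⌊K * f⌋₊ : ℝ) / K = (K * f - ⌊K * f⌋₊) / K := by field_simp
    rw [h, abs_div, abs_of_pos hK0]
    refine div_le_div_of_nonneg_right ?_ hK0.le
    rw [abs_le]
    constructor <;> linarith
  have e4 := hjp r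
  have e5 : u + ((j r + N).toNat : ℕ) * β - ((⌊u + N * β⌋ - p r : ℤ) : ℝ)
      = (j r * β + p r + (⌊K * f⌋₊ : ℝ) / K) + (f - (⌊K * f⌋₊ : ℝ) / K) := by
    rw [hc, hf, ← Int.self_sub_floor]; push_cast; ring
  rw [e5]
  refine (abs_add_le _ _).trans_lt ?_
  have : 2 / (K : ℝ) = 1 / K + 1 / K := by ring
  have e6 : |j r * β + p r + (⌊K * f⌋₊ : ℝ) / K| < 1 / K := e4
  linarith

open Filter Topology in
/-- If `g` grows asymptotically geometrically with a ratio that is multiplicatively independent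
of `q`, then the quotients `q ^ m / g n` are dense in the positive reals. -/
lemma exists_pow_div_near {q : ℕ} (hq : 2 ≤ q) {α : ℝ} (hα : 0 < α)
    (hirr : Irrational (Real.log α / Real.log q)) {g : ℕ → ℝ} (hg : ∀ n, 0 < g n)
    (hg' : Tendsto g atTop atTop) (hr : Tendsto (fun n => g (n + 1) / g n) atTop (𝓝 α))
    {ρ : ℝ} (hρ : 0 < ρ) {ε : ℝ} (hε : 0 < ε) (n₀ : ℕ) :
    ∃ n ≥ n₀, ∃ m : ℕ, |(q : ℝ) ^ m / g n - ρ| < ε := by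
  have hq1 : (1 : ℝ) < q := by exact_mod_cast hq
  have hlq : 0 < Real.log q := Real.log_pos hq1
  set β := Real.log α / Real.log q
  let y : ℕ → ℝ := fun n => Real.log (g n) / Real.log q
  set s := Real.log ρ / Real.log q with hs
  have hqs : (q : ℝ) ^ s = ρ := by
    rw [Real.rpow_def_of_pos (by linarith), hs, mul_div_cancel₀ _ hlq.ne', Real.exp_log hρ]
  obtain ⟨ε', hε', hcont⟩ : ∃ ε' > 0, ∀ v, |v - s| < ε' → |(q : ℝ) ^ v - ρ| < ε := by
    have : ContinuousAt (fun v : ℝ => (q : ℝ) ^ v) s :=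
      (Real.continuous_const_rpow (by linarith)).continuousAt
    obtain ⟨d, hd, h⟩ := Metric.continuousAt_iff.1 this ε hε
    refine ⟨d, hd, fun v hv => ?_⟩
    have := h (x := v) (by rwa [Real.dist_eq])
    rwa [Real.dist_eq, hqs] at this
  obtain ⟨J, hJ⟩ := exists_finset_near_int hirr (half_pos hε')
  have hy1 : Tendsto (fun n => y (n + 1) - y n) atTop (𝓝 β) := by
    have h1 := ((Real.continuousAt_log hα.ne').tendsto.comp hr).div_const (Real.log q)
    refine h1.congr fun n => ?_
    simp only [Function.comp, y]
    rw [Real.log_div (hg _).ne' (hg _).ne', sub_div]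
  have hyj : ∀ j : ℕ, Tendsto (fun n => y (n + j) - y n) atTop (𝓝 (j * β)) := by
    intro j
    induction j with
    | zero => simp
    | succ j ih =>
      have h2 := (hy1.comp (tendsto_add_atTop_nat j)).add ih
      have : β + j * β = (j + 1 : ℕ) * β := by push_cast; ring
      rw [this] at h2
      refine h2.congr fun n => ?_
      simp only [Function.comp, add_assoc]
      ring
  have hytop : Tendsto y atTop atTop :=
    (Real.tendsto_log_atTop.comp hg').atTop_div_const hlq
  have hev : ∀ᶠ n in atTop, ∀ j ∈ J, |y (n + j) - y n - j * β| < ε' / 2 := by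
    rw [Filter.eventually_all_finset]
    intro j _
    have := Metric.tendsto_nhds.1 (hyj j) (ε' / 2) (half_pos hε')
    filter_upwards [this] with n hn
    rwa [Real.dist_eq] at hn
  obtain ⟨n1, hn1⟩ := eventually_atTop.1 (hytop.eventually_ge_atTop (ε' - s))
  obtain ⟨n2, hn2⟩ := eventually_atTop.1 hev
  set n := max n₀ (max n1 n2) with hn
  obtain ⟨j, hj, e, he⟩ := hJ (y n + s)
  have h3 := hn2 n (by omega) j hj
  have h4 : |(e : ℝ) - y (n + j) - s| < ε' := by
    have : (e : ℝ) - y (n + j) - s = -((y n + s + j * β - e) + (y (n + j) - y n - j * β)) := by ring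
    rw [this, abs_neg]
    exact (abs_add_le _ _).trans_lt (by linarith)
  have h5 := hn1 (n + j) (by omega)
  have he0 : 0 ≤ e := by
    have := (abs_lt.1 h4).1
    have : (0 : ℝ) < e := by linarith
    exact_mod_cast this.le
  obtain ⟨m, rfl⟩ := Int.eq_ofNat_of_zero_le he0
  refine ⟨n + j, by omega, m, ?_⟩
  have h6 := hcont (m - y (n + j)) (by simpa using h4)
  have h7 : (q : ℝ) ^ ((m : ℝ) - y (n + j)) = (q : ℝ) ^ m / g (n + j) := by
    rw [Real.rpow_sub (by linarith), Real.rpow_natCast]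
    congr 1
    rw [Real.rpow_def_of_pos (by linarith), mul_div_cancel₀ _ hlq.ne', Real.exp_log (hg _)]
  rwa [h7] at h6

/-! ### The case of geometric growth -/

/-- All letters occurring far enough in a sequence over a finite alphabet recur infinitely often. -/
lemma exists_recurrent_from {B : Type*} [Finite B] (x : ℕ → B) :
    ∃ R, ∀ k ≥ R, {k' | x k' = x k}.Infinite := by
  have : ∀ c : B, ∃ R, ¬ {k | x k = c}.Infinite → ∀ k ≥ R, x k ≠ c := by
    intro c
    by_cases h : {k | x k = c}.Infinite
    · exact ⟨0, fun h' => absurd h h'⟩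
    · obtain ⟨S, hS⟩ := (Set.not_infinite.1 h).bddAbove
      refine ⟨S + 1, fun _ k hk hc => ?_⟩
      have := hS hc
      omega
  choose R hR using this
  obtain ⟨S, hS⟩ := (Set.finite_range R).bddAbove
  refine ⟨S, fun k hk => ?_⟩
  by_contra h
  exact hR (x k) h k (le_trans (hS ⟨_, rfl⟩) hk) rfl

/-- If `T + 1` occurrences of a factor sit at positions `D j` which are, up to an increasing
error of at most `q ^ m / 2`, congruent modulo `q ^ (m + 2)`, then two of these occurrences are
covered by pairs of blocks with the same type, and comparing them shows that every window of length
`2 * q ^ m` of the factor has a local period at most `q ^ m / 2`. -/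
lemma exists_locPer_of_occurrences {A : Type*} {q : ℕ} (hq : 2 ≤ q) {a : ℕ → A} {T : ℕ}
    (ty : ℕ → Fin T)
    (hblock : ∀ z z', ty z = ty z' → ∀ m i, i < 2 * q ^ m → a (q ^ m * z + i) = a (q ^ m * z' + i))
    (m : ℕ) (D : Fin (T + 1) → ℕ) (e : Fin (T + 1) → ℤ) (len : ℕ) (y : ℕ)
    (hD : ∀ i j, i < j → D i ≤ D j)
    (hocc : ∀ j, ∀ v < len, a (y + v) = a (D j + v))
    (hpos : ∀ i j, i < j → 0 < ((D j : ℤ) - D i) - q ^ (m + 2) * (e j - e i))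
    (hle : ∀ i j, i < j → 2 * (((D j : ℤ) - D i) - q ^ (m + 2) * (e j - e i)) ≤ q ^ m)
    (o : ℕ) (ho : o + 2 * q ^ m ≤ len) :
    ∃ P, 0 < P ∧ 2 * P ≤ q ^ m ∧ LocPer a (y + o) (2 * q ^ m) P := by
  have hQ : (1 : ℤ) ≤ (q : ℤ) ^ m := one_le_pow₀ (by exact_mod_cast (by omega : 1 ≤ q))
  have hQ2 : 4 * (q : ℤ) ^ m ≤ (q : ℤ) ^ (m + 2) := by
    have : (4 : ℤ) ≤ q ^ 2 := by
      have : (2 : ℤ) ≤ q := by exact_mod_cast hq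
      nlinarith
    rw [pow_add]; nlinarith
  set Q : ℤ := (q : ℤ) ^ (m + 2) with hQdef
  set z0 := (D 0 + o) / q ^ (m + 2) with hz0
  have hz1 : Q * z0 ≤ D 0 + o := by
    have := Nat.div_mul_le_self (D 0 + o) (q ^ (m + 2))
    rw [← hz0] at this
    zify at this
    linarith
  have hz2 : (D 0 : ℤ) + o < Q * z0 + Q := by
    have := Nat.lt_div_mul_add (a := D 0 + o) (b := q ^ (m + 2)) (by positivity)
    rw [← hz0] at this
    zify at this
    linarith
  have hΔ : ∀ j, 0 ≤ ((D j : ℤ) - D 0) - Q * (e j - e 0) ∧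
      2 * (((D j : ℤ) - D 0) - Q * (e j - e 0)) ≤ q ^ m := by
    intro j
    rcases eq_or_ne j 0 with rfl | hj
    · simp
    · have := Fin.pos_of_ne_zero hj
      exact ⟨(hpos 0 j this).le, hle 0 j this⟩
  have he : ∀ j, 0 ≤ e j - e 0 := by
    intro j
    by_contra hneg
    have h1 : e j - e 0 ≤ -1 := by omega
    have h2 : Q * (e j - e 0) ≤ Q * (-1) := mul_le_mul_of_nonneg_left h1 (by linarith)
    have h3 := (hΔ j).2
    have h4 : (D 0 : ℤ) ≤ D j := by
      rcases eq_or_ne j 0 with rfl | hj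
      · simp
      · exact_mod_cast hD 0 j (Fin.pos_of_ne_zero hj)
    linarith
  let z : Fin (T + 1) → ℕ := fun j => z0 + (e j - e 0).toNat
  have hz : ∀ j, (z j : ℤ) = z0 + (e j - e 0) := fun j => by
    simp only [z]; push_cast; rw [Int.toNat_of_nonneg (he j)]
  obtain ⟨i, j, hij, hty⟩ : ∃ i j, i < j ∧ ty (z i) = ty (z j) := by
    obtain ⟨r, r', hne, heq⟩ := Fintype.exists_ne_map_eq_of_card_lt
      (fun j : Fin (T + 1) => ty (z j)) (by simp)
    rcases lt_or_gt_of_ne hne with h | h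
    · exact ⟨r, r', h, heq⟩
    · exact ⟨r', r, h, heq.symm⟩
  obtain ⟨P, hP⟩ := Int.eq_ofNat_of_zero_le (hpos i j hij).le
  have h1 := hpos i j hij
  have h2 := hle i j hij
  refine ⟨P, by omega, by rw [hP] at h2; exact_mod_cast h2, ?_⟩
  intro v hv hv'
  obtain ⟨v, rfl⟩ : ∃ v', v = y + v' := ⟨v - y, by omega⟩
  rw [add_assoc, hocc i _ (by omega), hocc j _ (by omega)]
  -- Both letters are at the same offset `u` from the starts of the blocks `z i` and `z j`.
  obtain ⟨u, hu⟩ := Int.eq_ofNat_of_zero_le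
    (show 0 ≤ (D j : ℤ) + v - Q * z j by
      have := (hΔ j).1
      rw [hz j]; zify at hv; linarith)
  have hu2 : (u : ℤ) < 2 * Q := by
    have := (hΔ j).2
    rw [hz j] at hu
    zify at hv'
    linarith
  have hu' : (D i : ℤ) + (v + P) = Q * z i + u := by
    rw [← hu, hz i, hz j]; linarith
  have e1 : D i + (v + P) = q ^ (m + 2) * z i + u := by
    zify; rw [hu']
  have e2 : D j + v = q ^ (m + 2) * z j + u := by
    zify; rw [← hQdef]; linarith
  rw [e1, e2]
  refine hblock _ _ hty _ _ ?_
  zify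
  exact hu2

/-- Simultaneous approximation of several strictly increasing families: the errors can be made
increasing along each family. -/
lemma exists_increasing_errors {ι : Type*} [Finite ι] {N : ℕ} (δ : ι → Fin N → ℝ)
    (hδ : ∀ s, StrictMono (δ s)) {κ : ℝ} (hκ : 0 < κ) :
    ∃ Γ > 0, ∀ X : ℝ, ∃ t, X ≤ t ∧ t ≤ X + Γ ∧ ∃ e : ι → Fin N → ℤ, ∀ s i j, i < j →
      0 < (δ s j - δ s i) * t - (e s j - e s i) ∧ (δ s j - δ s i) * t - (e s j - e s i) < κ := by
  let S := {p : ι × Fin N × Fin N // p.2.1 < p.2.2}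
  let d : S → ℝ := fun p => δ p.1.1 p.1.2.2 - δ p.1.1 p.1.2.1
  have hd : ∀ p, 0 < d p := fun p => sub_pos.2 (hδ _ p.2)
  obtain ⟨U, hU⟩ : ∃ U > 0, ∀ p, d p ≤ U := by
    obtain ⟨U, hU⟩ := (Set.finite_range d).bddAbove
    exact ⟨max U 1, by positivity, fun p => (hU ⟨p, rfl⟩).trans (le_max_left _ _)⟩
  obtain ⟨V, hV0, hV⟩ : ∃ V > 0, ∀ p, V ≤ d p := by
    obtain ⟨V, hV⟩ := (Set.finite_range (fun p => (d p)⁻¹)).bddAbove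
    refine ⟨(max V 1)⁻¹, by positivity, fun p => ?_⟩
    rw [inv_le_comm₀ (by positivity) (hd p)]
    exact (hV ⟨p, rfl⟩).trans (le_max_left _ _)
  obtain ⟨hU0, hU⟩ := hU
  set η := κ / (2 * (U + V)) with hη
  have hη0 : 0 < η := by positivity
  have hUV : (U + V) * η = κ / 2 := by rw [hη]; field_simp
  obtain ⟨Γ, hΓ, h⟩ := exists_near_int_window (fun p : ι × Fin N => δ p.1 p.2)
    (show 0 < V * η / 2 by positivity)
  refine ⟨Γ + η, by positivity, fun X => ?_⟩
  obtain ⟨t, ht1, ht2, e, he⟩ := h X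
  refine ⟨t + η, by linarith, by linarith, fun s i => e (s, i), fun s i j hij => ?_⟩
  have h1 := abs_lt.1 (he (s, i))
  have h2 := abs_lt.1 (he (s, j))
  have h3 := mul_le_mul_of_nonneg_right (hU ⟨(s, i, j), hij⟩) hη0.le
  have h4 := mul_le_mul_of_nonneg_right (hV ⟨(s, i, j), hij⟩) hη0.le
  simp only [d] at h3 h4 h1 h2
  constructor <;> linarith

/-- A dilation of a finite set of positive reals whose points all lie strictly inside the intervals
cut out by a sequence tending to infinity, arbitrarily far. -/
lemma exists_generic_dilation {Ξ : Set ℝ} (hΞ : Ξ.Finite) (hpos : ∀ ξ ∈ Ξ, 0 < ξ) {ℓ : ℕ → ℝ}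
    (hmono : Monotone ℓ) (hℓ : Filter.Tendsto ℓ Filter.atTop Filter.atTop) (R : ℕ) :
    ∃ θ > 0, ∀ ξ ∈ Ξ, ∃ k ≥ R, ℓ k < θ * ξ ∧ θ * ξ < ℓ (k + 1) := by
  have hcount : (⋃ ξ ∈ Ξ, Set.range (fun k => ℓ k / ξ)).Countable :=
    hΞ.countable.biUnion fun ξ _ => Set.countable_range _
  obtain ⟨S, hS⟩ := (hΞ.image (fun ξ => ℓ R / ξ)).bddAbove
  obtain ⟨θ, hθ, hθ'⟩ := (hcount.dense_compl ℝ).exists_gt (max S 0)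
  refine ⟨θ, (le_max_right _ _).trans_lt hθ', fun ξ hξ => ?_⟩
  have hξ0 := hpos ξ hξ
  have hR : ℓ R < θ * ξ := by
    have : ℓ R / ξ ≤ S := hS ⟨ξ, hξ, rfl⟩
    rw [← div_lt_iff₀ hξ0]
    exact (this.trans (le_max_left _ _)).trans_lt hθ'
  have hne : ∀ k, ℓ k ≠ θ * ξ := by
    intro k hk
    apply hθ
    simp only [Set.mem_iUnion]
    exact ⟨ξ, hξ, k, by simp only; rw [hk]; field_simp⟩
  obtain ⟨n, hn⟩ := (hℓ.eventually_gt_atTop (θ * ξ)).exists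
  classical
  have hex : ∃ n, θ * ξ < ℓ n := ⟨n, hn⟩
  have h1 := Nat.find_spec hex
  have h2 : R < Nat.find hex := by
    by_contra hcon
    exact absurd (hmono (not_lt.1 hcon)) (by linarith)
  refine ⟨Nat.find hex - 1, by omega, ?_, ?_⟩
  · have := Nat.find_min hex (m := Nat.find hex - 1) (by omega)
    exact lt_of_le_of_ne (not_lt.1 this) (hne _)
  · rwa [Nat.sub_add_cancel (by omega)]

open Filter Topology in
/-- A `q`-automatic sequence which, for every `n`, is a concatenation of words indexed by the
letters of one sequence `x`, where the lengths of these words grow geometrically with `n`, with a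
ratio multiplicatively independent of `q`, is eventually periodic. -/
lemma eventuallyPeriodic_of_geometric {A B : Type*} [Fintype A] [Finite B] {q : ℕ} (hq : 2 ≤ q)
    {a : ℕ → A} (haut : IsQAutomatic q a) (x : ℕ → B) (len : ℕ → B → ℕ)
    (hblk : ∀ n k k', x k = x k' → ∀ i < len n (x k),
      a (∑ l ∈ Finset.range k, len n (x l) + i) = a (∑ l ∈ Finset.range k', len n (x l) + i))
    {α : ℝ} (hα : 0 < α) (hirr : Irrational (Real.log α / Real.log q))
    {g : ℕ → ℝ} (hg : ∀ n, 0 < g n) (hgtop : Tendsto g atTop atTop)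
    (hr : Tendsto (fun n => g (n + 1) / g n) atTop (𝓝 α))
    (lam : B → ℝ) (hlam : ∀ c, Tendsto (fun n => (len n c : ℝ) / g n) atTop (𝓝 (lam c)))
    (hℓ : Tendsto (fun k => ∑ l ∈ Finset.range k, lam (x l)) atTop atTop) :
    ∃ N P : ℕ, 0 < P ∧ ∀ n ≥ N, a (n + P) = a n := by
  classical
  obtain ⟨T, ty, hblock, -⟩ := exists_types hq haut
  obtain ⟨Ξ, H, G, Z, hΞ, hΞpos, hH, hG, hanch⟩ := exists_anchor_points hq haut
  obtain ⟨R, hR⟩ := exists_recurrent_from x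
  set ℓ : ℕ → ℝ := fun k => ∑ l ∈ Finset.range k, lam (x l) with hℓdef
  set L : ℕ → ℕ → ℕ := fun n k => ∑ l ∈ Finset.range k, len n (x l) with hLdef
  have hlam0 : ∀ c, 0 ≤ lam c := fun c =>
    ge_of_tendsto' (hlam c) fun n => div_nonneg (by positivity) (hg n).le
  have hℓsucc : ∀ k, ℓ (k + 1) = ℓ k + lam (x k) := fun k => Finset.sum_range_succ _ _
  have hLsucc : ∀ n k, L n (k + 1) = L n k + len n (x k) := fun n k => Finset.sum_range_succ _ _
  have hℓmono : Monotone ℓ := monotone_nat_of_le_succ fun k => by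
    rw [hℓsucc]; linarith [hlam0 (x k)]
  have hLmono : ∀ n, Monotone (L n) := fun n => monotone_nat_of_le_succ fun k => by
    rw [hLsucc]; omega
  have hLlim : ∀ k, Tendsto (fun n => (L n k : ℝ) / g n) atTop (𝓝 (ℓ k)) := by
    intro k
    have := tendsto_finsetSum (Finset.range k) (fun l _ => hlam (x l))
    refine this.congr fun n => ?_
    simp only [hLdef]
    push_cast
    rw [Finset.sum_div]
  have hfin : Finite Ξ := hΞ
  obtain ⟨θ, hθ, hθΞ⟩ := exists_generic_dilation hΞ hΞpos hℓmono hℓ R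
  have hθΞ' : ∀ ξ : Ξ, ∃ k ≥ R, ℓ k < θ * ξ ∧ θ * ξ < ℓ (k + 1) := fun ξ => hθΞ ξ ξ.2
  choose k hkR hk1 hk2 using hθΞ'
  -- Occurrences of the letters straddling the points `θ * ξ`.
  let occ : Ξ → ℕ → ℕ := fun ξ => Nat.nth (fun k' => x k' = x (k ξ))
  have hocc : ∀ ξ j, x (occ ξ j) = x (k ξ) := fun ξ j =>
    Nat.nth_mem_of_infinite (hR _ (hkR ξ)) j
  have hoccm : ∀ ξ, StrictMono (occ ξ) := fun ξ => Nat.nth_strictMono (hR _ (hkR ξ))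
  let δ : Ξ → Fin (T + 1) → ℝ := fun ξ j => ℓ (occ ξ j)
  have hδ : ∀ ξ, StrictMono (δ ξ) := by
    intro ξ i j hij
    have h1 : occ ξ i + 1 ≤ occ ξ j := hoccm ξ hij
    have h2 := hℓmono h1
    rw [hℓsucc, hocc] at h2
    have h3 := hℓsucc (k ξ)
    have h4 := hk1 ξ
    have h5 := hk2 ξ
    simp only [δ]
    linarith
  -- A margin that keeps perturbations of `θ * ξ` strictly inside the same intervals.
  obtain ⟨ε, hε, hεθ, hεk⟩ : ∃ ε > 0, ε < θ ∧ ∀ ξ : Ξ, ∀ θ' β : ℝ, |θ' - θ| ≤ ε → |β| ≤ ε →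
      ℓ (k ξ) < θ' * ξ + β ∧ θ' * ξ + β < ℓ (k ξ + 1) := by
    have h1 : ∀ ξ : Ξ, ∀ᶠ ε in 𝓝[>] (0 : ℝ), ∀ θ' β : ℝ, |θ' - θ| ≤ ε → |β| ≤ ε →
        ℓ (k ξ) < θ' * ξ + β ∧ θ' * ξ + β < ℓ (k ξ + 1) := by
      intro ξ
      have hξ := hΞpos ξ ξ.2
      have c1 : Tendsto (fun ε : ℝ => ε * (ξ + 1)) (𝓝[>] 0) (𝓝 0) := by
        have : Tendsto (fun ε : ℝ => ε * ((ξ : ℝ) + 1)) (𝓝 0) (𝓝 (0 * (ξ + 1))) :=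
          tendsto_id.mul_const _
        rw [zero_mul] at this
        exact this.mono_left nhdsWithin_le_nhds
      filter_upwards [c1.eventually_lt_const (sub_pos.2 (hk1 ξ)),
        c1.eventually_lt_const (sub_pos.2 (hk2 ξ))] with ε e1 e2 θ' β hθ' hβ
      have h3 := abs_le.1 hβ
      have h4 := abs_le.1 hθ'
      have h5 := mul_le_mul_of_nonneg_right h4.1 hξ.le
      have h6 := mul_le_mul_of_nonneg_right h4.2 hξ.le
      constructor <;> linarith
    have h2 : ∀ᶠ ε in 𝓝[>] (0 : ℝ), ε < θ :=
      nhdsWithin_le_nhds (eventually_lt_nhds hθ)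
    obtain ⟨ε, e1, e2, e3⟩ := ((Filter.eventually_all.2 h1).and
      (h2.and self_mem_nhdsWithin)).exists
    exact ⟨ε, e3, e2, e1⟩
  have hq0 : (0 : ℝ) < q := by exact_mod_cast (by omega : 0 < q)
  have hq1 : (1 : ℝ) < q := by exact_mod_cast (by omega : 1 < q)
  obtain ⟨Γ, hΓ, hBohr⟩ := exists_increasing_errors δ hδ
    (show 0 < 1 / (2 * (q : ℝ) ^ 2) by positivity)
  -- A scale `q ^ E`, with `E` a multiple of `H`, at which the admissible interval is long enough.
  have hpow : Tendsto (fun e : ℕ => (q : ℝ) ^ (H * e)) atTop atTop :=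
    (tendsto_pow_atTop_atTop_of_one_lt hq1).comp
      (tendsto_id.const_mul_atTop' hH)
  set c0 : ℝ := 1 / (q ^ 2 * (θ - ε)) - 1 / (q ^ 2 * (θ + ε)) with hc0
  have hc0pos : 0 < c0 := by
    rw [hc0, sub_pos]
    have : 0 < θ - ε := by linarith
    apply one_div_lt_one_div_of_lt (by positivity)
    gcongr
    linarith
  obtain ⟨e0, he1, he2⟩ := ((hpow.eventually_ge_atTop (Γ / c0)).and
    (hpow.eventually_ge_atTop ((G + 2) * (θ + ε) / ε))).exists
  set E := H * e0 with hE
  have hQ : 0 < (q : ℝ) ^ E := by positivity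
  obtain ⟨t, ht1, ht2, e, he⟩ := hBohr (q ^ E * (1 / (q ^ 2 * (θ + ε))))
  have ht0 : 0 < t := lt_of_lt_of_le (by positivity) ht1
  have ht3 : t ≤ q ^ E * (1 / (q ^ 2 * (θ - ε))) := by
    rw [div_le_iff₀ hc0pos, hc0] at he1
    linarith
  set ρ := 1 / (q ^ 2 * t) with hρ
  have hρ0 : 0 < ρ := by positivity
  have hρt : ρ * q ^ 2 * t = 1 := by rw [hρ]; field_simp
  have hθ1 : ρ * q ^ E ≤ θ + ε := by
    rw [hρ, div_mul_eq_mul_div, one_mul, div_le_iff₀ (by positivity)]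
    rw [mul_one_div, div_le_iff₀ (by positivity)] at ht1
    linarith
  have hθ2 : θ - ε ≤ ρ * q ^ E := by
    have : 0 < θ - ε := by linarith
    rw [hρ, div_mul_eq_mul_div, one_mul, le_div_iff₀ (by positivity)]
    rw [mul_one_div, le_div_iff₀ (by positivity)] at ht3
    linarith
  have hρG : ρ * (G + 2) ≤ ε := by
    rw [div_le_iff₀ hε] at he2
    have h1 : ρ * ((G + 2) * (θ + ε)) ≤ (θ + ε) * ε := by
      calc ρ * ((G + 2) * (θ + ε)) ≤ ρ * (q ^ E * ε) := by gcongr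
        _ = (ρ * q ^ E) * ε := by ring
        _ ≤ (θ + ε) * ε := by gcongr
    have h2 : 0 < θ + ε := by linarith
    nlinarith
  have hθ3 : |ρ * q ^ E - θ| ≤ ε := by rw [abs_le]; constructor <;> linarith
  -- All the requirements on `(n, m)` are open conditions on `(n, q ^ m / g n)` near `(∞, ρ)`.
  have hfst : ∀ j, Tendsto (fun p : ℕ × ℝ => (L p.1 j : ℝ) / g p.1) (atTop ×ˢ 𝓝 ρ) (𝓝 (ℓ j)) :=
    fun j => (hLlim j).comp tendsto_fst
  have hsnd : Tendsto (fun p : ℕ × ℝ => p.2) (atTop ×ˢ 𝓝 ρ) (𝓝 ρ) := tendsto_snd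
  have hcond : ∀ᶠ p : ℕ × ℝ in atTop ×ˢ 𝓝 ρ, ∀ ξ : Ξ,
      ((L p.1 (k ξ) : ℝ) / g p.1 < p.2 * (q ^ E * ξ - G) ∧
        p.2 * (q ^ E * ξ + (G + 2)) < (L p.1 (k ξ + 1) : ℝ) / g p.1) ∧
      ∀ i j : Fin (T + 1), i < j →
        0 < (L p.1 (occ ξ j) : ℝ) / g p.1 - (L p.1 (occ ξ i) : ℝ) / g p.1
          - p.2 * (q ^ 2 * (e ξ j - e ξ i)) ∧
        (L p.1 (occ ξ j) : ℝ) / g p.1 - (L p.1 (occ ξ i) : ℝ) / g p.1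
          - p.2 * (q ^ 2 * (e ξ j - e ξ i)) < p.2 * (1 / 2) := by
    rw [Filter.eventually_all]
    intro ξ
    refine Filter.Eventually.and (Filter.Eventually.and ?_ ?_) ?_
    · refine (hfst _).eventually_lt (hsnd.mul_const _) ?_
      have := (hεk ξ (ρ * q ^ E) (-(ρ * G)) hθ3 (by
        rw [abs_neg, abs_of_pos (by positivity)]; nlinarith)).1
      linarith
    · refine (hsnd.mul_const _).eventually_lt (hfst _) ?_
      have := (hεk ξ (ρ * q ^ E) (ρ * (G + 2)) hθ3 (by
        rw [abs_of_pos (by positivity)]; exact hρG)).2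
      linarith
    · simp only [Filter.eventually_all]
      intro i j hij
      have h1 := he ξ i j hij
      have h2 : δ ξ j - δ ξ i - ρ * (q ^ 2 * (e ξ j - e ξ i))
          = (ρ * q ^ 2) * ((δ ξ j - δ ξ i) * t - (e ξ j - e ξ i)) := by
        linear_combination (-(δ ξ j - δ ξ i)) * hρt
      have hlim := ((hfst (occ ξ j)).sub (hfst (occ ξ i))).sub
        (hsnd.mul_const ((q : ℝ) ^ 2 * (e ξ j - e ξ i)))
      refine Filter.Eventually.and ?_ ?_
      · refine hlim.eventually_const_lt ?_
        change 0 < δ ξ j - δ ξ i - ρ * (q ^ 2 * (e ξ j - e ξ i))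
        rw [h2]
        exact mul_pos (by positivity) h1.1
      · refine hlim.eventually_lt (hsnd.mul_const _) ?_
        change δ ξ j - δ ξ i - ρ * (q ^ 2 * (e ξ j - e ξ i)) < _
        rw [h2]
        have h3 := mul_lt_mul_of_pos_left h1.2 (show 0 < ρ * q ^ 2 by positivity)
        refine h3.trans_le (le_of_eq ?_)
        field_simp
  rw [Filter.eventually_prod_iff] at hcond
  obtain ⟨pa, hpa, pb, hpb, hcond⟩ := hcond
  obtain ⟨n0, hn0⟩ := eventually_atTop.1 hpa
  obtain ⟨ε1, hε1, hball⟩ := Metric.eventually_nhds_iff.1 hpb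
  obtain ⟨n, hn, m, hm⟩ := exists_pow_div_near hq hα hirr hg hgtop hr hρ0 hε1 n0
  have hfinal := hcond (hn0 n hn) (hball (by rwa [Real.dist_eq]))
  simp only at hfinal
  have hgn := hg n
  refine eventuallyPeriodic_of_windows a (q ^ m) Z (by positivity) fun z hz => ?_
  obtain ⟨ξ, hξ, hp⟩ := hanch z hz
  obtain ⟨p, hp1, hp2⟩ := hp m e0
  obtain ⟨⟨f1, f2⟩, f3⟩ := hfinal ⟨ξ, hξ⟩
  set ξ' : Ξ := ⟨ξ, hξ⟩ with hξ'
  have hcancel : (q : ℝ) ^ m / g n * g n = q ^ m := by field_simp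
  have hp1' := abs_le.1 hp1
  rw [pow_add, ← hE] at hp1'
  have g1 : L n (k ξ') ≤ p := by
    rw [div_lt_iff₀ hgn] at f1
    have : (q : ℝ) ^ m / g n * (q ^ E * ξ - G) * g n = q ^ m * (q ^ E * ξ - G) := by
      rw [mul_right_comm, hcancel]
    rw [this] at f1
    have : (L n (k ξ') : ℝ) ≤ p := by linarith [hp1'.1]
    exact_mod_cast this
  have g2 : p + 2 * q ^ m ≤ L n (k ξ' + 1) := by
    rw [lt_div_iff₀ hgn] at f2
    have : (q : ℝ) ^ m / g n * (q ^ E * ξ + (G + 2)) * g n = q ^ m * (q ^ E * ξ + (G + 2)) := by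
      rw [mul_right_comm, hcancel]
    rw [this] at f2
    have : (p : ℝ) + 2 * q ^ m ≤ L n (k ξ' + 1) := by linarith [hp1'.2]
    exact_mod_cast this
  rw [hLsucc] at g2
  have hmain : ∀ i j : Fin (T + 1), i < j →
      0 < ((L n (occ ξ' j) : ℤ) - L n (occ ξ' i)) - q ^ (m + 2) * (e ξ' j - e ξ' i) ∧
      2 * (((L n (occ ξ' j) : ℤ) - L n (occ ξ' i)) - q ^ (m + 2) * (e ξ' j - e ξ' i)) ≤ q ^ m := by
    intro i j hij
    obtain ⟨h1, h2⟩ := f3 i j hij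
    have e1 : (L n (occ ξ' j) : ℝ) / g n - (L n (occ ξ' i) : ℝ) / g n
          - (q : ℝ) ^ m / g n * (q ^ 2 * (e ξ' j - e ξ' i))
        = (((L n (occ ξ' j) : ℝ) - L n (occ ξ' i)) - q ^ (m + 2) * (e ξ' j - e ξ' i)) / g n := by
      rw [pow_add]; field_simp
    rw [e1] at h1 h2
    constructor
    · have h3 := (div_pos_iff_of_pos_right hgn).1 h1
      exact_mod_cast h3
    · rw [div_mul_eq_mul_div, div_lt_div_iff_of_pos_right hgn] at h2
      have h3 : 2 * (((L n (occ ξ' j) : ℝ) - L n (occ ξ' i))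
          - q ^ (m + 2) * (e ξ' j - e ξ' i)) ≤ q ^ m := by linarith
      exact_mod_cast h3
  obtain ⟨P, hP0, hP1, hP2⟩ := exists_locPer_of_occurrences hq ty hblock m
    (fun j => L n (occ ξ' j)) (e ξ') (len n (x (k ξ'))) (L n (k ξ'))
    (fun i j hij => hLmono n (hoccm ξ' hij).le)
    (fun j v hv => hblk n _ _ (hocc ξ' j).symm v hv)
    (fun i j hij => (hmain i j hij).1) (fun i j hij => (hmain i j hij).2)
    (p - L n (k ξ')) (by omega)
  rw [Nat.add_sub_cancel' g1] at hP2
  refine ⟨P, hP0, hP1, fun v hv hv' => ?_⟩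
  have e1 : v = q ^ m * z + (v - q ^ m * z) := by omega
  have e2 : v + P = q ^ m * z + (v - q ^ m * z + P) := by omega
  rw [e2, hp2 _ (by omega)]
  conv_rhs => rw [e1, hp2 _ (by omega)]
  rw [← add_assoc]
  exact hP2 _ (by omega) (by omega)

/-! ### Recurrent nonnegative vectors of nonnegative linear maps -/

open Filter Topology in
/-- The space of vectors that have a bounded orbit under `T` and are recurrent along the given
sequence of iterates. -/
def recurrentSubspace {B : Type*} [Fintype B] (T : Module.End ℝ (B → ℝ)) (φ : ℕ → ℕ) :
    Submodule ℝ (B → ℝ) where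
  carrier := {p | Tendsto (fun i => (T ^ φ i) p) atTop (𝓝 p) ∧ ∃ C, ∀ n c, |(T ^ n) p c| ≤ C}
  zero_mem' := ⟨by simp, 0, by simp⟩
  add_mem' := by
    rintro p p' ⟨h1, C, hC⟩ ⟨h2, C', hC'⟩
    refine ⟨by simpa using h1.add h2, C + C', fun n c => ?_⟩
    rw [map_add]
    exact (abs_add_le _ _).trans (add_le_add (hC n c) (hC' n c))
  smul_mem' := by
    rintro s p ⟨h1, C, hC⟩
    refine ⟨by simpa using h1.const_smul s, |s| * C, fun n c => ?_⟩
    rw [map_smul, Pi.smul_apply, smul_eq_mul, abs_mul]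
    exact mul_le_mul_of_nonneg_left (hC n c) (abs_nonneg s)

section Recurrent

open Filter Topology

lemma nonneg_pow {B : Type*} {T : Module.End ℝ (B → ℝ)} (hT : ∀ p, 0 ≤ p → 0 ≤ T p) {p : B → ℝ} (hp : 0 ≤ p) (n : ℕ) :
    0 ≤ (T ^ n) p := by
  induction n with
  | zero => simpa using hp
  | succ n ih =>
    rw [pow_succ', Module.End.mul_apply]
    exact hT _ ih

variable {B : Type*} [Fintype B] {T : Module.End ℝ (B → ℝ)} {φ : ℕ → ℕ}

lemma recurrentSubspace_map {p : B → ℝ} (hp : p ∈ recurrentSubspace T φ) :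
    T p ∈ recurrentSubspace T φ := by
  obtain ⟨h1, C, hC⟩ := hp
  refine ⟨?_, C, fun n c => ?_⟩
  · have h2 := (T.continuous_of_finiteDimensional.tendsto p).comp h1
    refine h2.congr fun i => ?_
    simp only [Function.comp]
    rw [← Module.End.mul_apply, ← Module.End.mul_apply, ← pow_succ, ← pow_succ']
  · rw [← Module.End.mul_apply, ← pow_succ]
    exact hC _ _

lemma recurrentSubspace_pow {p : B → ℝ} (hp : p ∈ recurrentSubspace T φ) (n : ℕ) :
    (T ^ n) p ∈ recurrentSubspace T φ := by
  induction n with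
  | zero => simpa using hp
  | succ n ih =>
    rw [pow_succ', Module.End.mul_apply]
    exact recurrentSubspace_map ih

/-- On recurrent vectors, a nonnegative map reflects nonnegativity. -/
lemma nonneg_of_map_nonneg (hT : ∀ p, 0 ≤ p → 0 ≤ T p) (hφ : Tendsto φ atTop atTop)
    {p : B → ℝ} (hp : p ∈ recurrentSubspace T φ) (h : 0 ≤ T p) : 0 ≤ p := by
  refine ge_of_tendsto hp.1 ?_
  filter_upwards [hφ.eventually_ge_atTop 1] with i hi
  obtain ⟨n, hn⟩ : ∃ n, φ i = n + 1 := ⟨φ i - 1, by omega⟩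
  rw [hn, pow_succ, Module.End.mul_apply]
  exact nonneg_pow hT h n

lemma eq_zero_of_map_eq_zero (hT : ∀ p, 0 ≤ p → 0 ≤ T p) (hφ : Tendsto φ atTop atTop)
    {p : B → ℝ} (hp : p ∈ recurrentSubspace T φ) (h : T p = 0) : p = 0 := by
  refine le_antisymm ?_ (nonneg_of_map_nonneg hT hφ hp h.ge)
  have := nonneg_of_map_nonneg hT hφ (Submodule.neg_mem _ hp) (by rw [map_neg, h, neg_zero])
  exact neg_nonneg.1 this

lemma exists_smul_le {p p' : B → ℝ} (hp' : 0 ≤ p')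
    (h : ∀ c, p' c = 0 → p c = 0) : ∃ s : ℝ, p ≤ s • p' := by
  obtain ⟨s, hs⟩ := (Set.finite_range (fun c => p c / p' c)).bddAbove
  refine ⟨s, fun c => ?_⟩
  have h1 : p c / p' c ≤ s := hs ⟨c, rfl⟩
  rw [Pi.smul_apply, smul_eq_mul]
  rcases (hp' c).eq_or_lt with h0 | h0
  · rw [h c h0.symm, ← h0]; simp
  · rwa [div_le_iff₀ h0] at h1

lemma support_reflect (hT : ∀ p, 0 ≤ p → 0 ≤ T p) (hφ : Tendsto φ atTop atTop)
    {p p' : B → ℝ} (hp : p ∈ recurrentSubspace T φ) (hp' : p' ∈ recurrentSubspace T φ)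
    (h0 : 0 ≤ p) (h0' : 0 ≤ p') (h : ∀ c, T p' c = 0 → T p c = 0) :
    ∀ c, p' c = 0 → p c = 0 := by
  obtain ⟨s, hs⟩ := exists_smul_le (hT _ h0') h
  have := nonneg_of_map_nonneg hT hφ (Submodule.sub_mem _ (Submodule.smul_mem _ s hp') hp)
    (by rw [map_sub, map_smul]; exact sub_nonneg.2 hs)
  intro c hc
  have h1 := this c
  simp only [Pi.zero_apply, Pi.sub_apply, Pi.smul_apply, hc, smul_zero, zero_sub] at h1
  exact le_antisymm (by linarith) (h0 c)

/-- Some iterate of a recurrent nonnegative vector is supported in its support. -/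
lemma exists_support_return (hT : ∀ p, 0 ≤ p → 0 ≤ T p) (hφ : Tendsto φ atTop atTop)
    {p : B → ℝ} (hp : p ∈ recurrentSubspace T φ) (h0 : 0 ≤ p) :
    ∃ h ≥ 1, ∀ c, p c = 0 → (T ^ h) p c = 0 := by
  obtain ⟨i, j, hij, hs⟩ : ∃ i j : ℕ, i < j ∧
      {c | (T ^ i) p c = 0} = {c | (T ^ j) p c = 0} := by
    obtain ⟨i, j, hne, heq⟩ :=
      Finite.exists_ne_map_eq_of_infinite (fun n : ℕ => {c | (T ^ n) p c = 0})
    rcases lt_or_gt_of_ne hne with h | h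
    · exact ⟨i, j, h, heq⟩
    · exact ⟨j, i, h, heq.symm⟩
  refine ⟨j - i, by omega, ?_⟩
  have key : ∀ k, (∀ c, (T ^ k) p c = 0 → (T ^ (k + (j - i))) p c = 0) →
      ∀ c, p c = 0 → (T ^ (j - i)) p c = 0 := by
    intro k
    induction k with
    | zero => intro h; simpa using h
    | succ k ih =>
      intro h
      refine ih (support_reflect hT hφ (recurrentSubspace_pow hp _) (recurrentSubspace_pow hp _)
        (nonneg_pow hT h0 _) (nonneg_pow hT h0 _) ?_)
      intro c
      rw [← Module.End.mul_apply, ← Module.End.mul_apply, ← pow_succ', ← pow_succ']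
      have := h c
      rwa [show k + 1 + (j - i) = k + (j - i) + 1 by omega] at this
  refine key i fun c hc => ?_
  rw [show i + (j - i) = j by omega]
  have : c ∈ {c | (T ^ i) p c = 0} := hc
  rw [hs] at this
  exact this

/-- A recurrent vector on which an iterate of `T` acts by a positive scalar different from `1`
vanishes. -/
lemma eq_zero_of_pow_smul {N : ℕ} (hN : 1 ≤ N) (hφ : Tendsto φ atTop atTop) {y : B → ℝ}
    (hy : y ∈ recurrentSubspace T φ) {s : ℝ} (hs : 0 < s) (hs1 : s ≠ 1) (h : y = s • (T ^ N) y) :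
    y = 0 := by
  obtain ⟨hrec, C, hC⟩ := hy
  have hiter : ∀ k, y = s ^ k • (T ^ (N * k)) y := by
    intro k
    induction k with
    | zero => simp
    | succ k ih =>
      have : (T ^ (N * (k + 1))) y = (T ^ (N * k)) ((T ^ N) y) := by
        rw [← Module.End.mul_apply, ← pow_add, mul_add, mul_one]
      rw [this, pow_succ, mul_smul, ← map_smul, ← h]
      exact ih
  have hC0 : ∀ c : B, 0 ≤ C := fun c => (abs_nonneg _).trans (hC 0 c)
  rcases lt_or_gt_of_ne hs1 with h1 | h1
  · funext c
    have hb : ∀ k, |y c| ≤ s ^ k * C := by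
      intro k
      conv_lhs => rw [hiter k]
      rw [Pi.smul_apply, smul_eq_mul, abs_mul, abs_of_pos (by positivity)]
      exact mul_le_mul_of_nonneg_left (hC _ _) (by positivity)
    have hlim := (tendsto_pow_atTop_nhds_zero_of_lt_one hs.le h1).mul_const C
    rw [zero_mul] at hlim
    exact abs_nonpos_iff.1 (ge_of_tendsto' hlim hb)
  · have hbound : ∀ n c, |(T ^ n) y c| ≤ (s⁻¹) ^ (n / N) * C := by
      intro n c
      have e1 : (T ^ n) y = (T ^ (n % N)) ((T ^ (N * (n / N))) y) := by
        rw [← Module.End.mul_apply, ← pow_add, add_comm, Nat.div_add_mod]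
      have e2 : (T ^ (N * (n / N))) y = (s⁻¹) ^ (n / N) • y := by
        conv_rhs => rw [hiter (n / N)]
        rw [smul_smul, inv_pow, inv_mul_cancel₀ (by positivity), one_smul]
      rw [e1, e2, map_smul, Pi.smul_apply, smul_eq_mul, abs_mul, abs_of_pos (by positivity)]
      exact mul_le_mul_of_nonneg_left (hC _ _) (by positivity)
    have hdiv : Tendsto (fun i => φ i / N) atTop atTop :=
      (Nat.tendsto_div_const_atTop (by omega)).comp hφ
    have hlim := ((tendsto_pow_atTop_nhds_zero_of_lt_one (inv_nonneg.2 hs.le)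
      (inv_lt_one_of_one_lt₀ h1)).comp hdiv).mul_const C
    rw [zero_mul] at hlim
    funext c
    have h2 : Tendsto (fun i => |(T ^ φ i) y c|) atTop (𝓝 |y c|) :=
      ((tendsto_pi_nhds.1 hrec) c).abs
    exact abs_nonpos_iff.1 (le_of_tendsto_of_tendsto' h2 hlim fun i => hbound _ _)

/-- A recurrent nonnegative vector of a nonnegative linear map is periodic. The proof is by
induction on the support: some iterate `T ^ h` of `p` has the same support, so that `p` is the sum
of a positive multiple of `(T ^ h) p` and a recurrent nonnegative vector of smaller support. -/
lemma exists_periodic_of_recurrent (hT : ∀ p, 0 ≤ p → 0 ≤ T p) (hφ : Tendsto φ atTop atTop)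
    {p : B → ℝ} (hp : p ∈ recurrentSubspace T φ) (h0 : 0 ≤ p) : ∃ h ≥ 1, (T ^ h) p = p := by
  classical
  obtain ⟨N, hN⟩ : ∃ N, (Finset.univ.filter (fun c => p c ≠ 0)).card = N := ⟨_, rfl⟩
  induction N using Nat.strong_induction_on generalizing p with
  | _ N ih =>
  by_cases hp0 : p = 0
  · exact ⟨1, le_rfl, by rw [hp0, map_zero]⟩
  obtain ⟨h, hh, hsupp⟩ := exists_support_return hT hφ hp h0
  set p1 := (T ^ h) p with hp1
  have hp10 : 0 ≤ p1 := nonneg_pow hT h0 _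
  have hp1ne : p1 ≠ 0 := by
    have : ∀ n, (T ^ n) p ≠ 0 := by
      intro n
      induction n with
      | zero => simpa using hp0
      | succ n ihn =>
        intro hc
        rw [pow_succ', Module.End.mul_apply] at hc
        exact ihn (eq_zero_of_map_eq_zero hT hφ (recurrentSubspace_pow hp n) hc)
    exact this h
  obtain ⟨c1, hc1⟩ := Function.ne_iff.1 hp1ne
  obtain ⟨c0, hc0, hmin⟩ := Finset.exists_min_image (Finset.univ.filter (fun c => p1 c ≠ 0))
    (fun c => p c / p1 c) ⟨c1, by simpa using hc1⟩
  simp only [Finset.mem_filter, Finset.mem_univ, true_and] at hc0 hmin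
  set t := p c0 / p1 c0 with ht
  have hp1c0 : 0 < p1 c0 := lt_of_le_of_ne (hp10 c0) (Ne.symm hc0)
  have hpc0 : p c0 ≠ 0 := fun h => hc0 (hsupp c0 h)
  have ht0 : 0 < t := div_pos (lt_of_le_of_ne (h0 c0) (Ne.symm hpc0)) hp1c0
  set r := p - t • p1 with hr
  have hrmem : r ∈ recurrentSubspace T φ :=
    Submodule.sub_mem _ hp (Submodule.smul_mem _ _ (recurrentSubspace_pow hp _))
  have hr0 : 0 ≤ r := by
    intro c
    simp only [hr, Pi.zero_apply, Pi.sub_apply, Pi.smul_apply, smul_eq_mul]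
    by_cases hc : p1 c = 0
    · rw [hc, mul_zero, sub_zero]; exact h0 c
    · have := hmin c hc
      rw [le_div_iff₀ (lt_of_le_of_ne (hp10 c) (Ne.symm hc))] at this
      linarith
  have hrcard : (Finset.univ.filter (fun c => r c ≠ 0)).card < N := by
    rw [← hN]
    apply Finset.card_lt_card
    rw [Finset.ssubset_iff_of_subset]
    · refine ⟨c0, by simpa using hpc0, ?_⟩
      simp only [Finset.mem_filter, Finset.mem_univ, true_and, not_not, hr, Pi.sub_apply,
        Pi.smul_apply, smul_eq_mul, ht]
      field_simp
      ring
    · intro c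
      simp only [Finset.mem_filter, Finset.mem_univ, true_and]
      intro hc hpc
      apply hc
      simp [hr, hpc, hsupp c hpc]
  obtain ⟨h', hh', hrper⟩ := ih _ hrcard hrmem hr0 rfl
  -- Iterating `p = r + t • (T ^ h) p` gives `p = r' + t ^ h' • S p` with `S r' = r'`.
  have hiter : ∀ k, ∃ r' ∈ recurrentSubspace T φ, (T ^ h') r' = r' ∧
      p = r' + t ^ k • (T ^ (h * k)) p := by
    intro k
    induction k with
    | zero => exact ⟨0, Submodule.zero_mem _, map_zero _, by simp⟩
    | succ k ihk =>
      obtain ⟨r', hr', hper, heq⟩ := ihk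
      refine ⟨r' + t ^ k • (T ^ (h * k)) r, Submodule.add_mem _ hr'
        (Submodule.smul_mem _ _ (recurrentSubspace_pow hrmem _)), ?_, ?_⟩
      · rw [map_add, map_smul, hper, ← Module.End.mul_apply, ← pow_add, add_comm h', pow_add,
          Module.End.mul_apply, hrper]
      · have h1 : p = r + t • p1 := by rw [hr]; simp
        have h2 : (T ^ (h * k)) p = (T ^ (h * k)) r + t • (T ^ (h * (k + 1))) p := by
          conv_lhs => rw [h1, map_add, map_smul, hp1]
          rw [← Module.End.mul_apply (T ^ (h * k)), ← pow_add, mul_add, mul_one]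
        conv_lhs => rw [heq, h2, smul_add, smul_smul, ← pow_succ, ← add_assoc]
  obtain ⟨r', hr', hper, heq⟩ := hiter h'
  set t' := t ^ h' with ht'
  have ht'0 : 0 < t' := by positivity
  set n := h * h' with hn
  have hn1 : 1 ≤ n := Nat.mul_pos hh hh'
  have hperS : (T ^ n) r' = r' := by
    have : ∀ k, (T ^ (k * h')) r' = r' := by
      intro k
      induction k with
      | zero => simp
      | succ k ihk => rw [add_mul, one_mul, pow_add, Module.End.mul_apply, hper, ihk]
    exact this h
  refine ⟨n, hn1, ?_⟩
  by_cases ht1 : t' = 1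
  · rw [ht1, one_smul] at heq
    have hlin : ∀ k : ℕ, (T ^ (n * k)) p = p - (k : ℝ) • r' := by
      intro k
      induction k with
      | zero => simp
      | succ k ihk =>
        rw [mul_add, mul_one, add_comm, pow_add, Module.End.mul_apply, ihk, map_sub, map_smul,
          hperS]
        have : (T ^ n) p = p - r' := by rw [eq_sub_iff_add_eq, add_comm]; exact heq.symm
        rw [this]
        push_cast
        module
    have hr'0 : r' = 0 := by
      obtain ⟨-, C, hC⟩ := hp
      funext c
      by_contra hne
      obtain ⟨k, hk⟩ := exists_nat_gt ((C + |p c|) / |r' c|)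
      have hpos : 0 < |r' c| := abs_pos.2 hne
      rw [div_lt_iff₀ hpos] at hk
      have h1 := hC (n * k) c
      rw [hlin, Pi.sub_apply, Pi.smul_apply, smul_eq_mul] at h1
      have h2 : |(k : ℝ) * r' c| ≤ |p c| + |p c - k * r' c| := by
        have := abs_sub (p c) (p c - k * r' c)
        simpa using this
      rw [abs_mul, Nat.abs_cast] at h2
      linarith
    rw [hr'0, zero_add] at heq
    exact heq.symm
  · have h1t : (1 - t') ≠ 0 := sub_ne_zero.2 (Ne.symm ht1)
    have hy := eq_zero_of_pow_smul hn1 hφ (y := p - (1 - t')⁻¹ • r')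
      (Submodule.sub_mem _ hp (Submodule.smul_mem _ _ hr')) ht'0 ht1 (by
        rw [map_sub, map_smul, hperS, smul_sub, smul_smul]
        have h2 : t' • (T ^ n) p = p - r' := by
          rw [eq_sub_iff_add_eq, add_comm]; exact heq.symm
        rw [h2]
        have h3 : t' * (1 - t')⁻¹ = (1 - t')⁻¹ - 1 := by field_simp; ring
        rw [h3]
        module)
    rw [sub_eq_zero] at hy
    rw [hy, map_smul, hperS]

end Recurrent

/-! ### Growth of the iterates of a nonnegative matrix -/

section Growth

open Filter Topology

lemma tendsto_choose_div_choose {j d : ℕ} (h : j < d) :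
    Tendsto (fun n : ℕ => (n.choose j : ℝ) / n.choose d) atTop (𝓝 0) := by
  have h1 := (isEquivalent_choose j).div (isEquivalent_choose d)
  refine h1.symm.tendsto_nhds ?_
  have h2 := ((tendsto_pow_div_pow_atTop_zero (𝕜 := ℝ) h).comp
    tendsto_natCast_atTop_atTop).mul_const ((d.factorial : ℝ) / j.factorial)
  rw [zero_mul] at h2
  refine h2.congr fun n => ?_
  simp only [Function.comp, Pi.div_apply]
  rw [div_div_div_eq, div_mul_div_comm, mul_comm (j.factorial : ℝ)]

lemma tendsto_choose_add_div_choose (s d : ℕ) :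
    Tendsto (fun n : ℕ => ((n + s).choose d : ℝ) / n.choose d) atTop (𝓝 1) := by
  have h1 : Tendsto (fun n : ℕ => ((n + s : ℕ) : ℝ) ^ d / (n : ℝ) ^ d) atTop (𝓝 1) := by
    have h2 : Tendsto (fun n : ℕ => (1 + (s : ℝ) / n) ^ d) atTop (𝓝 ((1 + 0) ^ d)) :=
      ((tendsto_const_div_atTop_nhds_zero_nat (s : ℝ)).const_add 1).pow d
    rw [add_zero, one_pow] at h2
    refine h2.congr' ?_
    filter_upwards [eventually_gt_atTop 0] with n hn
    have : (n : ℝ) ≠ 0 := by positivity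
    rw [← div_pow]
    push_cast
    congr 1
    field_simp
  have h3 := ((isEquivalent_choose d).comp_tendsto (tendsto_add_atTop_nat s)).div
    (isEquivalent_choose d)
  refine h3.symm.tendsto_nhds (h1.congr fun n => ?_)
  simp only [Function.comp, Pi.div_apply]
  rw [div_div_div_cancel_right₀ (by positivity)]

lemma tendsto_coef {μ : ℂ} {α : ℝ} (hα : 0 < α) {j d : ℕ} (h : ‖μ‖ < α ∨ (‖μ‖ = α ∧ j < d)) :
    Tendsto (fun n : ℕ => ((n.choose d : ℂ) * (α : ℂ) ^ n)⁻¹ * ((n.choose j : ℂ) * μ ^ (n - j)))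
      atTop (𝓝 0) := by
  rw [tendsto_zero_iff_norm_tendsto_zero]
  have hnorm : ∀ n : ℕ, ‖((n.choose d : ℂ) * (α : ℂ) ^ n)⁻¹ * ((n.choose j : ℂ) * μ ^ (n - j))‖
      = (n.choose j : ℝ) * ‖μ‖ ^ (n - j) / ((n.choose d : ℝ) * α ^ n) := by
    intro n
    rw [norm_mul, norm_inv, norm_mul, norm_mul, norm_pow, norm_pow, Complex.norm_natCast,
      Complex.norm_natCast, Complex.norm_real, Real.norm_of_nonneg hα.le, inv_mul_eq_div]
  simp only [hnorm]
  rcases h with h | ⟨h, hjd⟩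
  · have hx : ‖(‖μ‖ / α)‖ < 1 := by
      rw [Real.norm_of_nonneg (by positivity), div_lt_one hα]; exact h
    have h1 := ((summable_choose_mul_geometric_of_norm_lt_one j hx).tendsto_atTop_zero).div_const
      (α ^ j)
    rw [zero_div] at h1
    rw [← tendsto_add_atTop_iff_nat j]
    refine squeeze_zero' (Eventually.of_forall fun n => by positivity) ?_ h1
    filter_upwards [eventually_ge_atTop d] with n hn
    have h2 : (1 : ℝ) ≤ (n + j).choose d := by
      exact_mod_cast Nat.choose_pos (show d ≤ n + j by omega)
    rw [Nat.add_sub_cancel, div_pow, mul_div_assoc', div_div, ← pow_add]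
    gcongr
    · nlinarith [pow_pos hα (n + j)]
  · have h1 := (tendsto_choose_div_choose hjd).div_const (α ^ j)
    rw [zero_div] at h1
    refine h1.congr' ?_
    filter_upwards [eventually_ge_atTop j] with n hn
    have : α ^ n = α ^ j * α ^ (n - j) := by rw [← pow_add]; congr 1; omega
    rw [h, this, div_div, ← mul_assoc, mul_div_mul_right _ _ (by positivity)]

/-- The orbit of a vector under a complex endomorphism with spectral radius at most `α`, provided
it is not `o(α ^ n)`, is asymptotic to `C(n, d) α ^ n` times a sum of rotated eigenvectors with
eigenvalues of modulus `α`. -/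
lemma exists_asymptotics_complex {V : Type*} [NormedAddCommGroup V] [NormedSpace ℂ V]
    [FiniteDimensional ℂ V] (f : Module.End ℂ V) (v : V) {α : ℝ} (hα : 0 < α)
    (hdom : ∀ μ, f.HasEigenvalue μ → ‖μ‖ ≤ α)
    (hne : ¬ Tendsto (fun n : ℕ => ((α : ℂ) ^ n)⁻¹ • (f ^ n) v) atTop (𝓝 0)) :
    ∃ (d : ℕ) (S : Finset ℂ) (w : ℂ → V), S.Nonempty ∧
      (∀ μ ∈ S, ‖μ‖ = α ∧ f.HasEigenvector μ (w μ)) ∧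
      Tendsto (fun n : ℕ => ((n.choose d : ℂ) * (α : ℂ) ^ n)⁻¹ • (f ^ n) v
        - ∑ μ ∈ S, (μ / α) ^ n • w μ) atTop (𝓝 0) := by
  classical
  have hαC : (α : ℂ) ≠ 0 := by exact_mod_cast hα.ne'
  have htop : v ∈ ⨆ μ : ℂ, f.maxGenEigenspace μ := by
    rw [Module.End.iSup_maxGenEigenspace_eq_top]; trivial
  obtain ⟨vm, hvm, hsum⟩ := (Submodule.mem_iSup_iff_exists_finsupp _ _).1 htop
  set S0 := vm.support with hS0
  have hgen : ∀ μ : ℂ, ∃ k : ℕ, ((f - μ • (1 : Module.End ℂ V)) ^ k) (vm μ) = 0 := fun μ =>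
    (Module.End.mem_maxGenEigenspace _ _ _).1 (hvm μ)
  let y : ℂ → ℕ → V := fun μ j => ((f - μ • (1 : Module.End ℂ V)) ^ j) (vm μ)
  have hysucc : ∀ μ j, y μ (j + 1) = f (y μ j) - μ • y μ j := by
    intro μ j
    simp only [y, pow_succ', Module.End.mul_apply, LinearMap.sub_apply, LinearMap.smul_apply,
      Module.End.one_apply]
  have hyzero : ∀ μ i j, i ≤ j → y μ i = 0 → y μ j = 0 := by
    intro μ i j hij h
    induction j, hij using Nat.le_induction with
    | base => exact h
    | succ j _ ih => rw [hysucc, ih]; simp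
  choose kk hkk using hgen
  obtain ⟨K, hK0, hK⟩ : ∃ K, 1 ≤ K ∧ ∀ μ ∈ S0, ∀ j ≥ K, y μ j = 0 := by
    refine ⟨S0.sup kk + 1, by omega, fun μ hμ j hj => hyzero μ (kk μ) j ?_ (hkk μ)⟩
    have := Finset.le_sup (f := kk) hμ
    omega
  have heigen : ∀ μ ∈ S0, ‖μ‖ ≤ α := by
    intro μ hμ
    have hex : ∃ k, y μ k = 0 := ⟨_, hkk μ⟩
    have h1 := Nat.find_spec hex
    have h0 : Nat.find hex ≠ 0 := by
      intro h
      rw [h] at h1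
      exact Finsupp.mem_support_iff.1 hμ (by simpa [y] using h1)
    obtain ⟨k, hk⟩ := Nat.exists_eq_succ_of_ne_zero h0
    have h2 := Nat.find_min hex (m := k) (by omega)
    rw [hk, hysucc, sub_eq_zero] at h1
    exact hdom μ (Module.End.hasEigenvalue_of_hasEigenvector
      ⟨Module.End.mem_eigenspace_iff.2 h1, h2⟩)
  have hfn : ∀ n : ℕ, (f ^ n) v =
      ∑ μ ∈ S0, ∑ j ∈ Finset.range K, ((n.choose j : ℂ) * μ ^ (n - j)) • y μ j := by
    intro n
    rw [← hsum, Finsupp.sum, map_sum]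
    refine Finset.sum_congr rfl fun μ hμ => ?_
    have hcomm : Commute (f - μ • (1 : Module.End ℂ V)) (μ • 1) :=
      (Commute.one_right _).smul_right μ
    have h1 : (f ^ n) (vm μ) =
        ∑ j ∈ Finset.range (n + 1), ((n.choose j : ℂ) * μ ^ (n - j)) • y μ j := by
      conv_lhs => rw [show f = (f - μ • (1 : Module.End ℂ V)) + μ • 1 by simp, hcomm.add_pow]
      rw [LinearMap.sum_apply]
      refine Finset.sum_congr rfl fun j _ => ?_
      rw [smul_pow, one_pow, mul_smul_comm, mul_one, Module.End.mul_apply, Module.End.natCast_apply,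
        LinearMap.smul_apply, map_nsmul, ← Nat.cast_smul_eq_nsmul ℂ, smul_smul, mul_comm]
    rw [h1]
    have h2 : ∀ m ≥ max K (n + 1),
        ∑ j ∈ Finset.range m, ((n.choose j : ℂ) * μ ^ (n - j)) • y μ j =
        ∑ j ∈ Finset.range (n + 1), ((n.choose j : ℂ) * μ ^ (n - j)) • y μ j := by
      intro m hm
      refine (Finset.sum_subset (Finset.range_subset_range.2 (by omega)) fun j _ hj => ?_).symm
      rw [Finset.mem_range, not_lt] at hj
      rw [Nat.choose_eq_zero_of_lt (by omega)]; simp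
    have h3 : ∀ m ≥ max K (n + 1),
        ∑ j ∈ Finset.range m, ((n.choose j : ℂ) * μ ^ (n - j)) • y μ j =
        ∑ j ∈ Finset.range K, ((n.choose j : ℂ) * μ ^ (n - j)) • y μ j := by
      intro m hm
      refine (Finset.sum_subset (Finset.range_subset_range.2 (by omega)) fun j _ hj => ?_).symm
      rw [Finset.mem_range, not_lt] at hj
      rw [hK μ hμ j hj, smul_zero]
    rw [← h2 _ le_rfl, h3 _ le_rfl]
  -- For every admissible degree `d`, only the terms with `j = d` and `‖μ‖ = α` survive.
  have hasym : ∀ d < K, (∀ μ ∈ S0, ‖μ‖ = α → ∀ j > d, y μ j = 0) →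
      Tendsto (fun n : ℕ => ((n.choose d : ℂ) * (α : ℂ) ^ n)⁻¹ • (f ^ n) v
        - ∑ μ ∈ S0, (μ / α) ^ n • (if ‖μ‖ = α then (μ ^ d)⁻¹ • y μ d else 0)) atTop (𝓝 0) := by
    intro d hd hmax
    have hterm : ∀ μ ∈ S0, ∀ j ∈ Finset.range K, Tendsto (fun n : ℕ =>
        (((n.choose d : ℂ) * (α : ℂ) ^ n)⁻¹ * ((n.choose j : ℂ) * μ ^ (n - j))) • y μ j
        - (if j = d then (μ / α) ^ n • (if ‖μ‖ = α then (μ ^ d)⁻¹ • y μ d else 0) else 0))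
        atTop (𝓝 0) := by
      intro μ hμ j _
      rcases (heigen μ hμ).lt_or_eq with hlt | heq
      · have h1 := (tendsto_coef hα (j := j) (d := d) (Or.inl hlt)).smul_const (y μ j)
        rw [zero_smul] at h1
        simpa [hlt.ne] using h1
      · rcases lt_trichotomy j d with hj | hj | hj
        · have h1 := (tendsto_coef hα (j := j) (d := d) (Or.inr ⟨heq, hj⟩)).smul_const (y μ j)
          rw [zero_smul] at h1
          simpa [hj.ne] using h1
        · subst hj
          refine tendsto_const_nhds.congr' ?_
          filter_upwards [eventually_ge_atTop j] with n hn
          have hc : (n.choose j : ℂ) ≠ 0 := by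
            exact_mod_cast (Nat.choose_pos hn).ne'
          have hμ0 : μ ≠ 0 := by
            rw [← norm_pos_iff, heq]; exact hα
          rw [if_pos rfl, if_pos heq, smul_smul, eq_comm, sub_eq_zero]
          congr 1
          have : μ ^ n = μ ^ (n - j) * μ ^ j := by rw [← pow_add]; congr 1; omega
          rw [div_pow, this]
          field_simp
        · rw [hmax μ hμ heq j hj]
          simp [hj.ne']
    have h2 := tendsto_finsetSum S0 fun μ hμ => tendsto_finsetSum (Finset.range K) (hterm μ hμ)
    simp only [Finset.sum_const_zero] at h2
    refine h2.congr fun n => ?_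
    rw [hfn, Finset.smul_sum, ← Finset.sum_sub_distrib]
    refine Finset.sum_congr rfl fun μ _ => ?_
    rw [Finset.sum_sub_distrib, Finset.smul_sum, Finset.sum_ite_eq',
      if_pos (Finset.mem_range.2 hd)]
    simp only [smul_smul]
  obtain ⟨d, hdK, hmax, μ0, hμ0, hμ0α, hy0⟩ : ∃ d < K,
      (∀ μ ∈ S0, ‖μ‖ = α → ∀ j > d, y μ j = 0) ∧ ∃ μ ∈ S0, ‖μ‖ = α ∧ y μ d ≠ 0 := by
    set J := (Finset.range K).filter (fun j => ∃ μ ∈ S0, ‖μ‖ = α ∧ y μ j ≠ 0) with hJ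
    rcases J.eq_empty_or_nonempty with hJ0 | hJ0
    · exfalso
      have hz : ∀ μ ∈ S0, ‖μ‖ = α → ∀ j, y μ j = 0 := by
        intro μ hμ hμα j
        by_contra hy
        have hjK : j < K := by
          by_contra hcon
          exact hy (hK μ hμ j (by omega))
        have : j ∈ J := by
          rw [hJ, Finset.mem_filter]
          exact ⟨Finset.mem_range.2 hjK, μ, hμ, hμα, hy⟩
        rw [hJ0] at this
        simp at this
      apply hne
      refine (hasym 0 (by omega) fun μ hμ hμα j _ => hz μ hμ hμα j).congr fun n => ?_
      rw [Finset.sum_eq_zero, sub_zero]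
      · simp
      · intro μ hμ
        split_ifs with h
        · rw [hz μ hμ h]; simp
        · simp
    · have hmem := J.max'_mem hJ0
      obtain ⟨hK', hex⟩ := Finset.mem_filter.1 hmem
      refine ⟨J.max' hJ0, Finset.mem_range.1 hK', ?_, hex⟩
      intro μ hμ hμα j hj
      by_contra hy
      have hjK : j < K := by
        by_contra hcon
        exact hy (hK μ hμ j (by omega))
      have : j ∈ J := by
        rw [hJ, Finset.mem_filter]
        exact ⟨Finset.mem_range.2 hjK, μ, hμ, hμα, hy⟩
      exact absurd (J.le_max' j this) (by omega)
  refine ⟨d, S0.filter (fun μ => ‖μ‖ = α ∧ y μ d ≠ 0), fun μ => (μ ^ d)⁻¹ • y μ d,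
    ⟨μ0, by simp only [Finset.mem_filter]; exact ⟨hμ0, hμ0α, hy0⟩⟩, ?_, ?_⟩
  · intro μ hμ
    obtain ⟨h1, h2, h3⟩ := Finset.mem_filter.1 hμ
    have hμ0 : μ ≠ 0 := by
      rw [← norm_pos_iff, h2]; exact hα
    refine ⟨h2, Module.End.mem_eigenspace_iff.2 ?_, smul_ne_zero (inv_ne_zero (pow_ne_zero _ hμ0)) h3⟩
    have h4 := hmax μ h1 h2 (d + 1) (by omega)
    rw [hysucc, sub_eq_zero] at h4
    rw [map_smul, h4, smul_comm]
  · refine (hasym d hdK hmax).congr fun n => ?_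
    congr 1
    rw [Finset.sum_filter]
    refine Finset.sum_congr rfl fun μ _ => ?_
    by_cases h1 : ‖μ‖ = α <;> by_cases h2 : y μ d = 0 <;> simp [h1, h2]

end Growth

/-! ### Asymptotics of the iterates of a nonnegative integer matrix -/

section RealAsymptotics

open Filter Topology

/-- Finitely many points of the unit circle have powers that return simultaneously to `1`. -/
lemma exists_recurrence (S : Finset ℂ) (hS : ∀ z ∈ S, ‖z‖ = 1) :
    ∃ φ : ℕ → ℕ, Tendsto φ atTop atTop ∧ ∀ z ∈ S, Tendsto (fun i => z ^ φ i) atTop (𝓝 1) := by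
  obtain ⟨l, -, ψ, hψ, hl⟩ := tendsto_subseq_of_bounded
    (Metric.isBounded_closedBall (x := (0 : S → ℂ)) (r := 1))
    (x := fun (n : ℕ) (z : S) => (z : ℂ) ^ n) (by
      intro n
      rw [mem_closedBall_zero_iff, pi_norm_le_iff_of_nonneg zero_le_one]
      intro z
      rw [norm_pow, hS z z.2, one_pow])
  have h2 : Tendsto (fun i : ℕ => 2 * i) atTop atTop :=
    tendsto_id.const_mul_atTop' two_pos
  have hgap : ∀ i, ψ i + i ≤ ψ (2 * i) := by
    intro i
    have : ∀ k, ψ i + k ≤ ψ (i + k) := by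
      intro k
      induction k with
      | zero => simp
      | succ k ih =>
        have := hψ (show i + k < i + (k + 1) by omega)
        omega
    simpa [two_mul] using this i
  refine ⟨fun i => ψ (2 * i) - ψ i, tendsto_atTop_mono (fun i => ?_) tendsto_id, fun z hz => ?_⟩
  · have := hgap i
    simp only [id]
    omega
  · have hlz := (tendsto_pi_nhds.1 hl) ⟨z, hz⟩
    simp only [Function.comp] at hlz
    have hz0 : z ≠ 0 := by
      intro h
      have := hS z hz
      simp [h] at this
    have hl1 : ‖l ⟨z, hz⟩‖ = 1 := by
      refine tendsto_nhds_unique hlz.norm ?_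
      simp [hS z hz]
    have hl0 : l ⟨z, hz⟩ ≠ 0 := by
      intro h
      simp [h] at hl1
    have := (hlz.comp h2).div hlz hl0
    rw [div_self hl0] at this
    refine this.congr fun i => ?_
    change z ^ ψ (2 * i) / z ^ ψ i = _
    have := hgap i
    rw [div_eq_iff (pow_ne_zero _ hz0), ← pow_add, show ψ (2 * i) - ψ i + ψ i = ψ (2 * i) by omega]

variable {B : Type*} [Fintype B] [DecidableEq B]

lemma toLin_nonneg (M : Matrix B B ℕ) (p : B → ℝ) (hp : 0 ≤ p) :
    0 ≤ Matrix.toLin' (M.map (fun n : ℕ => (n : ℝ))) p := by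
  intro c
  simp only [Matrix.toLin'_apply, Matrix.mulVec, dotProduct, Matrix.map_apply, Pi.zero_apply]
  exact Finset.sum_nonneg fun i _ => mul_nonneg (Nat.cast_nonneg _) (hp i)

lemma toLin_ofReal (M : Matrix B B ℕ) (p : B → ℝ) :
    Matrix.toLin' (M.map (fun n : ℕ => (n : ℂ))) (fun c => (p c : ℂ)) =
      fun c => ((Matrix.toLin' (M.map (fun n : ℕ => (n : ℝ))) p c : ℝ) : ℂ) := by
  funext c
  simp [Matrix.toLin'_apply, Matrix.mulVec, dotProduct, Matrix.map_apply]

lemma toLin_pow_ofReal (M : Matrix B B ℕ) (p : B → ℝ) (n : ℕ) :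
    (Matrix.toLin' (M.map (fun n : ℕ => (n : ℂ))) ^ n) (fun c => (p c : ℂ)) =
      fun c => (((Matrix.toLin' (M.map (fun n : ℕ => (n : ℝ))) ^ n) p c : ℝ) : ℂ) := by
  induction n with
  | zero => rfl
  | succ n ih =>
    rw [pow_succ', pow_succ', Module.End.mul_apply, Module.End.mul_apply, ih, toLin_ofReal]

/-- Iterates of a matrix dominate the modulus of iterates of vectors. -/
lemma norm_toLin_pow_le (M : Matrix B B ℕ) {y : B → ℂ} {v : B → ℝ} (hy : ∀ c, ‖y c‖ ≤ v c)
    (n : ℕ) (c : B) :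
    ‖(Matrix.toLin' (M.map (fun n : ℕ => (n : ℂ))) ^ n) y c‖ ≤
      (Matrix.toLin' (M.map (fun n : ℕ => (n : ℝ))) ^ n) v c := by
  induction n generalizing c with
  | zero => simpa using hy c
  | succ n ih =>
    rw [pow_succ', pow_succ', Module.End.mul_apply, Module.End.mul_apply]
    simp only [Matrix.toLin'_apply (M.map _), Matrix.mulVec, dotProduct, Matrix.map_apply]
    refine (norm_sum_le _ _).trans (Finset.sum_le_sum fun i _ => ?_)
    rw [norm_mul, Complex.norm_natCast]
    exact mul_le_mul_of_nonneg_left (ih i) (Nat.cast_nonneg _)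

/-- If `α > 0` is the dominant eigenvalue of a nonnegative integer matrix `M`, then, along some
arithmetic progression of exponents, the iterates of a vector with entries at least `1`, divided by
`n.choose d * α ^ n`, converge to a nonzero nonnegative vector. -/
lemma exists_asymptotics (M : Matrix B B ℕ) {α : ℝ} (hα : 0 < α)
    (heig : (M.map (fun n : ℕ => (n : ℂ))).charpoly.IsRoot (α : ℂ))
    (hdom : ∀ μ : ℂ, (M.map (fun n : ℕ => (n : ℂ))).charpoly.IsRoot μ → ‖μ‖ ≤ α)
    {v : B → ℝ} (hv : ∀ c, 1 ≤ v c) :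
    ∃ d h : ℕ, 1 ≤ h ∧ ∃ p : B → ℝ, 0 ≤ p ∧ p ≠ 0 ∧ ∀ c, Tendsto (fun n : ℕ =>
      (Matrix.toLin' (M.map (fun n : ℕ => (n : ℝ))) ^ (h * n)) v c /
        (((h * n).choose d : ℝ) * α ^ (h * n))) atTop (𝓝 (p c)) := by
  set f : Module.End ℂ (B → ℂ) := Matrix.toLin' (M.map (fun n : ℕ => (n : ℂ))) with hf
  set F : Module.End ℝ (B → ℝ) := Matrix.toLin' (M.map (fun n : ℕ => (n : ℝ))) with hF
  have hev : ∀ μ, f.HasEigenvalue μ ↔ (M.map (fun n : ℕ => (n : ℂ))).charpoly.IsRoot μ := by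
    intro μ
    rw [Module.End.hasEigenvalue_iff_isRoot_charpoly, hf, Matrix.charpoly_toLin']
  have hne : ¬ Tendsto (fun n => ((α : ℂ) ^ n)⁻¹ • (f ^ n) (fun c => (v c : ℂ))) atTop (𝓝 0) := by
    obtain ⟨y, hy⟩ := ((hev α).2 heig).exists_hasEigenvector
    obtain ⟨c, hc⟩ := Function.ne_iff.1 hy.2
    intro hlim
    have hpow : ∀ n, (f ^ n) y = (α : ℂ) ^ n • y := fun n => hy.pow_apply n
    have hbd : ∀ n : ℕ, ‖y c‖ ≤
        ‖y‖ * ‖(((α : ℂ) ^ n)⁻¹ • (f ^ n) (fun c => (v c : ℂ))) c‖ := by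
      intro n
      have h1 := norm_toLin_pow_le M (y := y) (v := ‖y‖ • v) (fun c => by
        rw [Pi.smul_apply, smul_eq_mul]
        exact (norm_le_pi_norm y c).trans (le_mul_of_one_le_right (norm_nonneg _) (hv c))) n c
      rw [← hf, hpow, ← hF, map_smul, Pi.smul_apply, Pi.smul_apply, smul_eq_mul, smul_eq_mul,
        norm_mul, norm_pow, Complex.norm_real, Real.norm_of_nonneg hα.le] at h1
      have hnn : 0 ≤ (F ^ n) v c :=
        nonneg_pow (toLin_nonneg M) (fun c => zero_le_one.trans (hv c)) n c
      rw [hf, toLin_pow_ofReal, ← hF, Pi.smul_apply, smul_eq_mul, norm_mul, norm_inv, norm_pow,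
        Complex.norm_real, Complex.norm_real, Real.norm_of_nonneg hα.le,
        Real.norm_of_nonneg hnn, mul_left_comm, inv_mul_eq_div, le_div_iff₀ (by positivity)]
      linarith
    have h0 := (((tendsto_pi_nhds.1 hlim) c).norm).const_mul ‖y‖
    simp only [Pi.zero_apply, norm_zero, mul_zero] at h0
    have := ge_of_tendsto' h0 hbd
    exact hc (norm_le_zero_iff.1 this)
  obtain ⟨d, S, w, hSne, hw, hlim⟩ := exists_asymptotics_complex f _ hα
    (fun μ hμ => hdom μ ((hev μ).1 hμ)) hne
  have hα0 : (α : ℂ) ≠ 0 := by exact_mod_cast hα.ne'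
  obtain ⟨φ, hφ, hrec⟩ := exists_recurrence (S.image (fun μ => μ / (α : ℂ))) (by
    simp only [Finset.mem_image, forall_exists_index, and_imp]
    rintro _ μ hμ rfl
    rw [norm_div, (hw μ hμ).1, Complex.norm_real, Real.norm_of_nonneg hα.le, div_self hα.ne'])
  set u : ℕ → B → ℂ := fun n => ∑ μ ∈ S, (μ / (α : ℂ)) ^ n • w μ with hu
  have hurec : ∀ n, Tendsto (fun i => u (φ i + n)) atTop (𝓝 (u n)) := by
    intro n
    refine tendsto_finsetSum _ fun μ hμ => ?_
    have := ((hrec _ (Finset.mem_image_of_mem _ hμ)).mul_const ((μ / (α : ℂ)) ^ n)).smul_const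
      (w μ)
    simpa [pow_add] using this
  set X : ℕ → B → ℝ := fun n c => (F ^ n) v c / ((n.choose d : ℝ) * α ^ n) with hX
  have hX0 : ∀ n c, 0 ≤ X n c := fun n c => div_nonneg
    (nonneg_pow (toLin_nonneg M) (fun c => zero_le_one.trans (hv c)) n c) (by positivity)
  have hXlim : ∀ c, Tendsto (fun n => (X n c : ℂ) - u n c) atTop (𝓝 0) := by
    intro c
    refine ((tendsto_pi_nhds.1 hlim) c).congr fun n => ?_
    rw [hf, toLin_pow_ofReal, ← hF]
    simp only [Pi.sub_apply, Pi.smul_apply, smul_eq_mul, hX, hu]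
    push_cast
    rw [inv_mul_eq_div]
  have hXu : ∀ n c, Tendsto (fun i => (X (φ i + n) c : ℂ)) atTop (𝓝 (u n c)) := by
    intro n c
    have hφn : Tendsto (fun i => φ i + n) atTop atTop := tendsto_atTop_mono (fun i => Nat.le_add_right _ _) hφ
    have := ((hXlim c).comp hφn).add ((tendsto_pi_nhds.1 (hurec n)) c)
    simpa [Function.comp_def] using this
  -- Every `u n` is a limit of nonnegative real vectors.
  set p : ℕ → B → ℝ := fun n c => (u n c).re with hp
  have hp0 : ∀ n, 0 ≤ p n := by
    intro n c
    refine ge_of_tendsto' ((Complex.continuous_re.tendsto _).comp (hXu n c)) fun i => ?_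
    simpa using hX0 _ c
  have hup : ∀ n, u n = fun c => (p n c : ℂ) := by
    intro n
    funext c
    have him : (u n c).im = 0 := by
      refine tendsto_nhds_unique ((Complex.continuous_im.tendsto _).comp (hXu n c)) ?_
      simp [Function.comp_def]
    exact Complex.ext (by simp [hp]) (by simp [him])
  set T : Module.End ℝ (B → ℝ) := α⁻¹ • F with hT
  have hTp : ∀ n, T (p n) = p (n + 1) := by
    intro n
    have h1 : f (u n) = (α : ℂ) • u (n + 1) := by
      simp only [hu, map_sum, map_smul, Finset.smul_sum]
      refine Finset.sum_congr rfl fun μ hμ => ?_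
      rw [(hw μ hμ).2.apply_eq_smul, smul_smul, smul_smul, pow_succ]
      congr 1
      field_simp
    rw [hup n, hf, toLin_ofReal, ← hF, hup (n + 1)] at h1
    funext c
    have h2 := congrFun h1 c
    simp only [Pi.smul_apply, smul_eq_mul] at h2
    have h3 : F (p n) c = α * p (n + 1) c := by exact_mod_cast h2
    simp only [hT, LinearMap.smul_apply, Pi.smul_apply, smul_eq_mul, h3]
    field_simp
  have hTpow : ∀ n, (T ^ n) (p 0) = p n := by
    intro n
    induction n with
    | zero => rfl
    | succ n ih => rw [pow_succ', Module.End.mul_apply, ih, hTp]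
  have hTnn : ∀ p, 0 ≤ p → 0 ≤ T p := by
    intro p hp
    rw [hT, LinearMap.smul_apply]
    exact smul_nonneg (inv_nonneg.2 hα.le) (toLin_nonneg M p hp)
  have hmem : p 0 ∈ recurrentSubspace T φ := by
    refine ⟨?_, ∑ μ ∈ S, ‖w μ‖, fun n c => ?_⟩
    · simp only [hTpow]
      rw [tendsto_pi_nhds]
      intro c
      have := (Complex.continuous_re.tendsto _).comp ((tendsto_pi_nhds.1 (hurec 0)) c)
      simpa [Function.comp_def] using this
    · rw [hTpow]
      refine (Complex.abs_re_le_norm _).trans ?_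
      simp only [hu, Finset.sum_apply, Pi.smul_apply, smul_eq_mul]
      refine (norm_sum_le _ _).trans (Finset.sum_le_sum fun μ hμ => ?_)
      rw [norm_mul, norm_pow, norm_div, (hw μ hμ).1, Complex.norm_real,
        Real.norm_of_nonneg hα.le, div_self hα.ne', one_pow, one_mul]
      exact norm_le_pi_norm _ _
  obtain ⟨h, hh, hper⟩ := exists_periodic_of_recurrent hTnn hφ hmem (hp0 0)
  have hphn : ∀ n, p (h * n) = p 0 := by
    intro n
    induction n with
    | zero => simp
    | succ n ih =>
      rw [mul_add, mul_one, ← hTpow, add_comm, pow_add, Module.End.mul_apply, hTpow (h * n), ih,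
        hper]
  refine ⟨d, h, hh, p 0, hp0 0, ?_, fun c => ?_⟩
  · intro hz
    have hu0 : u 0 = 0 := by rw [hup, hz]; simp; rfl
    have hli := Module.End.eigenvectors_linearIndependent' f (ι := S) (fun μ => (μ : ℂ))
      Subtype.val_injective (fun μ => w μ) (fun μ => (hw μ μ.2).2)
    obtain ⟨μ, hμ⟩ := hSne
    have := Fintype.linearIndependent_iff.1 hli (fun _ => 1) (by
      rw [← hu0, hu]
      simp only [one_smul, pow_zero]
      exact Finset.sum_coe_sort S w) ⟨μ, hμ⟩
    exact one_ne_zero this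
  · have hhn : Tendsto (fun n => h * n) atTop atTop := tendsto_id.const_mul_atTop' hh
    have h1 := (Complex.continuous_re.tendsto _).comp ((hXlim c).comp hhn)
    have h2 : Tendsto (fun n => X (h * n) c - p 0 c) atTop (𝓝 0) := by
      refine h1.congr fun n => ?_
      simp only [Function.comp, Complex.sub_re, Complex.ofReal_re]
      rw [← hphn n]
    simpa using h2.add_const (p 0 c)

end RealAsymptotics

/-! ### Images of words under the iterates of a morphism -/

/-- The word `τ (σ ^ n (w))`. -/
def imageWord {A B : Type*} (σ : B → List B) (τ : B → List A) (n : ℕ) (w : List B) : List A :=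
  ((wordApply σ)^[n] w).flatMap τ

section Words

open Filter Topology

variable {A B : Type*} (σ : B → List B) (τ : B → List A)

lemma iterate_nil (n : ℕ) : (wordApply σ)^[n] [] = [] := by
  induction n with
  | zero => rfl
  | succ n ih => rw [Function.iterate_succ_apply']; simp [ih, wordApply]

lemma iterate_append (n : ℕ) (u v : List B) :
    (wordApply σ)^[n] (u ++ v) = (wordApply σ)^[n] u ++ (wordApply σ)^[n] v := by
  induction n with
  | zero => rfl
  | succ n ih =>
    rw [Function.iterate_succ_apply', Function.iterate_succ_apply', Function.iterate_succ_apply',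
      ih]
    simp [wordApply]

@[simp] lemma imageWord_nil (n : ℕ) : imageWord σ τ n [] = [] := by
  simp [imageWord, iterate_nil]

@[simp] lemma imageWord_append (n : ℕ) (u v : List B) :
    imageWord σ τ n (u ++ v) = imageWord σ τ n u ++ imageWord σ τ n v := by
  simp [imageWord, iterate_append]

lemma imageWord_cons (n : ℕ) (c : B) (v : List B) :
    imageWord σ τ n (c :: v) = imageWord σ τ n [c] ++ imageWord σ τ n v := by
  rw [← imageWord_append, List.singleton_append]

lemma imageWord_add (n m : ℕ) (w : List B) :
    imageWord σ τ (n + m) w = imageWord σ τ n ((wordApply σ)^[m] w) := by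
  simp [imageWord, Function.iterate_add_apply]

lemma imageWord_succ (n : ℕ) (c : B) : imageWord σ τ (n + 1) [c] = imageWord σ τ n (σ c) := by
  rw [imageWord_add]; simp [wordApply]

lemma length_imageWord (n : ℕ) (w : List B) :
    (imageWord σ τ n w).length = (w.map fun c => (imageWord σ τ n [c]).length).sum := by
  induction w with
  | nil => simp
  | cons c w ih => rw [imageWord_cons]; simp [ih]

variable {σ τ}

lemma length_le_flatMap (hτ : ∀ c, τ c ≠ []) (w : List B) : w.length ≤ (w.flatMap τ).length := by
  induction w with
  | nil => simp
  | cons c w ih =>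
    have := List.length_pos_iff.2 (hτ c)
    simp only [List.flatMap_cons, List.length_cons, List.length_append]
    omega

/-- The vector of lengths of the words `τ (σ ^ n (c))` is obtained by iterating the transposed
adjacency matrix. -/
lemma length_imageWord_eq_pow [Fintype B] [DecidableEq B] {M : Matrix B B ℕ}
    (hM : ∀ i j, M i j = (σ j).count i) (n : ℕ) (c : B) :
    ((imageWord σ τ n [c]).length : ℝ) =
      (Matrix.toLin' (M.transpose.map (fun n : ℕ => (n : ℝ))) ^ n)
        (fun c => ((τ c).length : ℝ)) c := by
  induction n generalizing c with
  | zero => simp [imageWord]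
  | succ n ih =>
    rw [pow_succ', Module.End.mul_apply, imageWord_succ, length_imageWord]
    simp only [Matrix.toLin'_apply (M.transpose.map _), Matrix.mulVec, dotProduct,
      Matrix.map_apply, Matrix.transpose_apply, ← ih, hM]
    rw [Finset.sum_list_map_count, Finset.sum_subset (Finset.subset_univ _)]
    · push_cast
      simp
    · intro d _ hd
      rw [List.mem_toFinset] at hd
      simp [List.count_eq_zero_of_not_mem hd]

lemma eq_map_range_of_initial {C : Type*} {y : ℕ → C} {u w : List C} (h : u <+: w)
    (hw : w = (List.range w.length).map y) : u = (List.range u.length).map y := by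
  obtain ⟨v, rfl⟩ := h
  apply List.ext_getElem (by simp)
  intro i h1 h2
  have h3 := congrArg (fun l => l[i]?) hw
  simp only [List.getElem?_map] at h3
  rw [List.getElem?_append_left h1, List.getElem?_range (by simp; omega),
    List.getElem?_eq_getElem h1] at h3
  simpa using h3

variable {x : ℕ → B} {a : ℕ → A}

section

variable (hlen : Tendsto (fun n => ((wordApply σ)^[n] [x 0]).length) atTop atTop)
  (hfix : ∀ n, (wordApply σ)^[n] [x 0] =
    (List.range ((wordApply σ)^[n] [x 0]).length).map x)
  (ha : ∀ m, ((List.range m).map x).flatMap τ =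
    (List.range (((List.range m).map x).flatMap τ).length).map a)

include hfix ha in
lemma imageWord_start (n : ℕ) :
    imageWord σ τ n [x 0] = (List.range (imageWord σ τ n [x 0]).length).map a := by
  have := ha ((wordApply σ)^[n] [x 0]).length
  rwa [← hfix n] at this

include hlen hfix in
lemma exists_range_prefix_iterate (k : ℕ) : ∃ N, (List.range k).map x <+: (wordApply σ)^[N] [x 0] := by
  obtain ⟨N, hN⟩ := (hlen.eventually_ge_atTop k).exists
  obtain ⟨m, hm⟩ := Nat.exists_eq_add_of_le hN
  refine ⟨N, ?_⟩
  rw [hfix N, hm, List.range_add, List.map_append]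
  exact List.prefix_append _ _

include hlen hfix ha in
/-- The sequence `a` is the concatenation of the words `τ (σ ^ n (x k))`. -/
lemma imageWord_eq_map_range (n k : ℕ) : imageWord σ τ n ((List.range k).map x) =
    (List.range (imageWord σ τ n ((List.range k).map x)).length).map a := by
  obtain ⟨N, v, hv⟩ := exists_range_prefix_iterate hlen hfix k
  refine eq_map_range_of_initial (w := imageWord σ τ (n + N) [x 0]) ?_ (imageWord_start hfix ha _)
  rw [imageWord_add, ← hv, imageWord_append]
  exact List.prefix_append _ _

lemma length_imageWord_range (n k : ℕ) : (imageWord σ τ n ((List.range k).map x)).length =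
    ∑ l ∈ Finset.range k, (imageWord σ τ n [x l]).length := by
  rw [length_imageWord, Finset.sum_range, List.map_map]
  induction k with
  | zero => simp
  | succ k ih => rw [List.range_succ]; simp [ih, Fin.sum_univ_castSucc]

lemma getElem?_of_append {C : Type*} {y : ℕ → C} {u v : List C}
    (h : u ++ v = (List.range (u ++ v).length).map y) {i : ℕ} (hi : i < v.length) :
    v[i]? = some (y (u.length + i)) := by
  have h3 := congrArg (fun l => l[u.length + i]?) h
  simp only [List.getElem?_map] at h3
  rw [List.getElem?_append_right (by omega), List.getElem?_range (by simp; omega),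
    Nat.add_sub_cancel_left] at h3
  simpa using h3

include hlen hfix ha in
lemma getElem?_imageWord (n k : ℕ) {i : ℕ} (hi : i < (imageWord σ τ n [x k]).length) :
    (imageWord σ τ n [x k])[i]? =
      some (a (∑ l ∈ Finset.range k, (imageWord σ τ n [x l]).length + i)) := by
  have h := imageWord_eq_map_range hlen hfix ha n (k + 1)
  rw [List.range_succ, List.map_append, imageWord_append] at h
  rw [← length_imageWord_range]
  exact getElem?_of_append h hi

include hfix in
lemma sum_length_imageWord (n j : ℕ) :
    ∑ l ∈ Finset.range ((wordApply σ)^[j] [x 0]).length, (imageWord σ τ n [x l]).length =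
      (imageWord σ τ (n + j) [x 0]).length := by
  rw [← length_imageWord_range, ← hfix, imageWord_add]

end

end Words

/-! ### Growing letters and powers of words -/

/-- A letter is growing if the lengths of its images under the iterates of `σ` are unbounded. -/
def Growing {B : Type*} (σ : B → List B) (c : B) : Prop :=
  ∀ K, ∃ n, K < ((wordApply σ)^[n] [c]).length

open Classical in
/-- The number of growing letters of a word. -/
noncomputable def growingCount {B : Type*} (σ : B → List B) (w : List B) : ℕ :=
  w.countP (fun c => decide (Growing σ c))

section GrowingLetters

variable {B : Type*} {σ : B → List B}

lemma iterate_succ_singleton (n : ℕ) (c : B) :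
    (wordApply σ)^[n + 1] [c] = (wordApply σ)^[n] (σ c) := by
  rw [Function.iterate_succ_apply]; simp [wordApply]

lemma length_iterate_le_of_mem {c : B} {w : List B} (h : c ∈ w) (n : ℕ) :
    ((wordApply σ)^[n] [c]).length ≤ ((wordApply σ)^[n] w).length := by
  obtain ⟨u, v, rfl⟩ := List.append_of_mem h
  rw [iterate_append, show c :: v = [c] ++ v from rfl, iterate_append]
  simp only [List.length_append]
  omega

lemma mem_iterate_succ {c d e : B} {n : ℕ} (hd : d ∈ (wordApply σ)^[n] [c]) (he : e ∈ σ d) :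
    e ∈ (wordApply σ)^[n + 1] [c] := by
  rw [Function.iterate_succ_apply']
  exact List.mem_flatMap.2 ⟨d, hd, he⟩

lemma exists_growing_bound (σ : B → List B) [Fintype B] :
    ∃ K, ∀ c, ¬ Growing σ c → ∀ n, ((wordApply σ)^[n] [c]).length ≤ K := by
  have : ∀ c, ∃ K, ¬ Growing σ c → ∀ n, ((wordApply σ)^[n] [c]).length ≤ K := by
    intro c
    by_cases h : Growing σ c
    · exact ⟨0, fun h' => absurd h h'⟩
    · simp only [Growing, not_forall, not_exists, not_lt] at h
      obtain ⟨K, hK⟩ := h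
      exact ⟨K, fun _ => hK⟩
  choose K hK using this
  exact ⟨∑ c, K c, fun c hc n => (hK c hc n).trans
    (Finset.single_le_sum (fun _ _ => Nat.zero_le _) (Finset.mem_univ c))⟩

lemma length_iterate_le {K : ℕ} {n : ℕ} {w : List B}
    (h : ∀ c ∈ w, ((wordApply σ)^[n] [c]).length ≤ K) :
    ((wordApply σ)^[n] w).length ≤ w.length * K := by
  induction w with
  | nil => simp [iterate_nil]
  | cons c w ih =>
    rw [← List.singleton_append, iterate_append]
    have h1 := h c (by simp)
    have h2 := ih fun d hd => h d (by simp [hd])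
    simp only [List.length_append, List.length_singleton]
    rw [add_mul, one_mul]
    omega

lemma Growing.exists_mem [Fintype B] {c : B} (hc : Growing σ c) : ∃ d ∈ σ c, Growing σ d := by
  by_contra! h
  obtain ⟨K, hK⟩ := exists_growing_bound σ
  obtain ⟨n, hn⟩ := hc (1 + (σ c).length * K)
  cases n with
  | zero => simp at hn
  | succ n =>
    rw [iterate_succ_singleton] at hn
    have := length_iterate_le (fun d hd => hK d (h d hd) n)
    omega

lemma growingCount_append (u v : List B) :
    growingCount σ (u ++ v) = growingCount σ u + growingCount σ v := by
  simp [growingCount]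

lemma growingCount_singleton {c : B} (hc : Growing σ c) : growingCount σ [c] = 1 := by
  simp [growingCount, hc]

lemma growingCount_pos {w : List B} : 0 < growingCount σ w ↔ ∃ c ∈ w, Growing σ c := by
  simp [growingCount, List.countP_pos_iff]

lemma growingCount_le_length (w : List B) : growingCount σ w ≤ w.length :=
  List.countP_le_length

lemma mul_growingCount_le {N r : ℕ}
    (h : ∀ c, Growing σ c → r ≤ growingCount σ ((wordApply σ)^[N] [c])) (w : List B) :
    r * growingCount σ w ≤ growingCount σ ((wordApply σ)^[N] w) := by
  induction w with
  | nil => simp [growingCount]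
  | cons c w ih =>
    rw [← List.singleton_append, iterate_append, growingCount_append, growingCount_append, mul_add]
    refine add_le_add ?_ ih
    by_cases hc : Growing σ c
    · rw [growingCount_singleton hc, mul_one]; exact h c hc
    · simp [growingCount, hc]

lemma not_growing_of_iterate_eq {c : B} {k p : ℕ} (hp : 1 ≤ p)
    (h : (wordApply σ)^[k + p] [c] = (wordApply σ)^[k] [c]) : ¬ Growing σ c := by
  have hval : ∀ n, ∃ n' < k + p, (wordApply σ)^[n] [c] = (wordApply σ)^[n'] [c] := by
    intro n
    induction n using Nat.strong_induction_on with
    | _ n ih =>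
      by_cases hn : n < k + p
      · exact ⟨n, hn, rfl⟩
      · obtain ⟨n', hn', he⟩ := ih (n - p) (by omega)
        refine ⟨n', hn', ?_⟩
        rw [← he, show n = (n - (k + p)) + (k + p) by omega, Function.iterate_add_apply, h,
          ← Function.iterate_add_apply]
        congr 1
        omega
  intro hg
  obtain ⟨n, hn⟩ := hg (∑ n' ∈ Finset.range (k + p), ((wordApply σ)^[n'] [c]).length)
  obtain ⟨n', hn', he⟩ := hval n
  rw [he] at hn
  have := Finset.single_le_sum (f := fun n' => ((wordApply σ)^[n'] [c]).length)
    (fun _ _ => Nat.zero_le _) (Finset.mem_range.2 hn')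
  exact absurd hn (not_lt.2 this)

variable [Fintype B]

lemma growingCount_le_iterate (w : List B) (n : ℕ) :
    growingCount σ w ≤ growingCount σ ((wordApply σ)^[n] w) := by
  induction n with
  | zero => rfl
  | succ n ih =>
    refine ih.trans ?_
    rw [Function.iterate_succ_apply']
    have := mul_growingCount_le (σ := σ) (N := 1) (r := 1) (fun c hc => by
      rw [iterate_succ_singleton]
      exact growingCount_pos.2 hc.exists_mem) ((wordApply σ)^[n] w)
    simpa using this

/-- Either some growing letter has exactly one growing letter in each of its iterated images, or
all growing letters grow exponentially. -/
lemma exists_single_or_exponential (σ : B → List B) :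
    (∃ c, Growing σ c ∧ ∀ n, growingCount σ ((wordApply σ)^[n] [c]) = 1) ∨
      ∃ N, ∀ c, Growing σ c → ∀ k, 2 ^ k ≤ ((wordApply σ)^[N * k] [c]).length := by
  by_cases hs : ∃ c, Growing σ c ∧ ∀ n, growingCount σ ((wordApply σ)^[n] [c]) = 1
  · exact Or.inl hs
  right
  push Not at hs
  have : ∀ c, ∃ n, Growing σ c → 2 ≤ growingCount σ ((wordApply σ)^[n] [c]) := by
    intro c
    by_cases hc : Growing σ c
    · obtain ⟨n, hn⟩ := hs c hc
      have := growingCount_le_iterate (σ := σ) [c] n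
      rw [growingCount_singleton hc] at this
      exact ⟨n, fun _ => by omega⟩
    · exact ⟨0, fun h => absurd h hc⟩
  choose n hn using this
  have hN : ∀ c, Growing σ c → 2 ≤ growingCount σ ((wordApply σ)^[∑ c, n c] [c]) := by
    intro c hc
    have hle : n c ≤ ∑ c, n c :=
      Finset.single_le_sum (fun _ _ => Nat.zero_le _) (Finset.mem_univ c)
    rw [← Nat.sub_add_cancel hle, Function.iterate_add_apply]
    exact (hn c hc).trans (growingCount_le_iterate _ _)
  refine ⟨∑ c, n c, fun c hc k => le_trans ?_ (growingCount_le_length (σ := σ) _)⟩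
  induction k with
  | zero => simp [growingCount_singleton hc]
  | succ k ih =>
    rw [mul_add, mul_one, add_comm (_ * k), Function.iterate_add_apply, pow_succ, mul_comm (2 ^ k)]
    exact (Nat.mul_le_mul_left 2 ih).trans (mul_growingCount_le hN _)

/-- Some growing letter `c` occurs in `σ ^ (h * p) (c)` for all `p`, and it is the only growing
letter of this word. -/
lemma exists_cycle (hs : ∃ c, Growing σ c ∧ ∀ n, growingCount σ ((wordApply σ)^[n] [c]) = 1) :
    ∃ c, Growing σ c ∧ ∃ h ≥ 1, ∀ p, c ∈ (wordApply σ)^[h * p] [c] ∧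
      growingCount σ ((wordApply σ)^[h * p] [c]) = 1 := by
  set Q : B → Prop := fun c => Growing σ c ∧ ∀ n, growingCount σ ((wordApply σ)^[n] [c]) = 1
    with hQ
  have hnext : ∀ c : {c // Q c}, ∃ d : {c // Q c}, (d : B) ∈ σ c := by
    rintro ⟨c, hc, hc1⟩
    obtain ⟨d, hd, hdg⟩ := hc.exists_mem
    refine ⟨⟨d, hdg, fun n => ?_⟩, hd⟩
    have h1 := hc1 (n + 1)
    have h2 := growingCount_le_iterate (σ := σ) [d] n
    rw [growingCount_singleton hdg] at h2
    obtain ⟨u, v, huv⟩ := List.append_of_mem hd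
    rw [iterate_succ_singleton, huv, iterate_append, ← List.singleton_append, iterate_append,
      growingCount_append, growingCount_append] at h1
    omega
  choose nxt hnxt using hnext
  obtain ⟨c0, hc0⟩ := hs
  have hmem : ∀ (c : {c // Q c}) n, ((nxt^[n] c : {c // Q c}) : B) ∈ (wordApply σ)^[n] [(c : B)] := by
    intro c n
    induction n with
    | zero => simp
    | succ n ih =>
      rw [Function.iterate_succ_apply' nxt]
      exact mem_iterate_succ ih (hnxt _)
  obtain ⟨i, j, hij, heq⟩ : ∃ i j : ℕ, i < j ∧ nxt^[i] ⟨c0, hc0⟩ = nxt^[j] ⟨c0, hc0⟩ := by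
    obtain ⟨i, j, hne, heq⟩ := Finite.exists_ne_map_eq_of_infinite
      (fun n : ℕ => nxt^[n] ⟨c0, hc0⟩)
    rcases lt_or_gt_of_ne hne with h | h
    · exact ⟨i, j, h, heq⟩
    · exact ⟨j, i, h, heq.symm⟩
  set c := nxt^[i] ⟨c0, hc0⟩ with hc
  have hper : nxt^[j - i] c = c := by
    rw [hc, ← Function.iterate_add_apply, Nat.sub_add_cancel hij.le, ← heq]
  refine ⟨c, c.2.1, j - i, by omega, fun p => ⟨?_, c.2.2 _⟩⟩
  have hp : nxt^[(j - i) * p] c = c := by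
    rw [Function.iterate_mul]
    exact Function.iterate_fixed hper p
  have := hmem c ((j - i) * p)
  rwa [hp] at this

/-- The iterates of `σ` are eventually periodic on letters that are not growing. -/
lemma exists_periodic_bounded (σ : B → List B) :
    ∃ k p : ℕ, 1 ≤ p ∧ ∀ w : List B, growingCount σ w = 0 → ∀ j,
      (wordApply σ)^[k + p * j] w = (wordApply σ)^[k] w := by
  obtain ⟨K, hK⟩ := exists_growing_bound σ
  have hfin : Finite {l : List B // l.length ≤ K} := (List.finite_length_le B K).to_subtype
  obtain ⟨i, j, hij, heq⟩ : ∃ i j : ℕ, i < j ∧ ∀ c, ¬ Growing σ c →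
      (wordApply σ)^[i] [c] = (wordApply σ)^[j] [c] := by
    obtain ⟨i, j, hne, heq⟩ := Finite.exists_ne_map_eq_of_infinite
      (fun (n : ℕ) (c : {c // ¬ Growing σ c}) =>
        (⟨(wordApply σ)^[n] [(c : B)], hK c c.2 n⟩ : {l : List B // l.length ≤ K}))
    have heq' : ∀ c, ¬ Growing σ c → (wordApply σ)^[i] [c] = (wordApply σ)^[j] [c] :=
      fun c hc => congrArg Subtype.val (congrFun heq ⟨c, hc⟩)
    rcases lt_or_gt_of_ne hne with h | h
    · exact ⟨i, j, h, heq'⟩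
    · exact ⟨j, i, h, fun c hc => (heq' c hc).symm⟩
  refine ⟨i, j - i, by omega, fun w hw m => ?_⟩
  have hw1 : (wordApply σ)^[i + (j - i)] w = (wordApply σ)^[i] w := by
    rw [show i + (j - i) = j by omega]
    have hw' : ∀ c ∈ w, ¬ Growing σ c := by
      intro c hc hg
      have := growingCount_pos.2 ⟨c, hc, hg⟩
      omega
    clear hw
    induction w with
    | nil => simp [iterate_nil]
    | cons c w ih =>
      rw [← List.singleton_append, iterate_append, iterate_append, heq c (hw' c (by simp)),
        ih fun d hd => hw' d (by simp [hd])]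
  induction m with
  | zero => simp
  | succ m ih =>
    rw [mul_add, mul_one, show i + ((j - i) * m + (j - i)) = (j - i) * m + (i + (j - i)) by omega,
      Function.iterate_add_apply, hw1, ← Function.iterate_add_apply, add_comm, ih]

/-- If some growing letter has exactly one growing letter in each of its iterated images, then
arbitrarily high powers of some nonempty word occur in the iterated images of a letter. -/
lemma exists_powers (hs : ∃ c, Growing σ c ∧ ∀ n, growingCount σ ((wordApply σ)^[n] [c]) = 1) :
    ∃ (c : B) (y : List B), y ≠ [] ∧ ∀ j, ∃ n u v,
      (wordApply σ)^[n] [c] = u ++ ((List.replicate j y).flatten ++ v) := by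
  obtain ⟨c, hc, h, hh, hcyc⟩ := exists_cycle hs
  obtain ⟨k, p, hp, hper⟩ := exists_periodic_bounded σ
  obtain ⟨hmem, hcount⟩ := hcyc p
  obtain ⟨w, w', hw⟩ := List.append_of_mem hmem
  rw [hw, ← List.singleton_append, growingCount_append, growingCount_append,
    growingCount_singleton hc] at hcount
  have hper' : ∀ w : List B, growingCount σ w = 0 → ∀ j,
      (wordApply σ)^[k + (h * p) * j] w = (wordApply σ)^[k] w := by
    intro w hw j
    rw [← hper w hw (h * j)]
    congr 2
    ring
  have hstep : ∀ j, (wordApply σ)^[k + (h * p) * (j + 1)] [c] =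
      (wordApply σ)^[k] w ++ ((wordApply σ)^[k + (h * p) * j] [c] ++ (wordApply σ)^[k] w') := by
    intro j
    rw [mul_add, mul_one, ← add_assoc, Function.iterate_add_apply, hw, iterate_append,
      ← List.singleton_append, iterate_append, hper' w (by omega), hper' w' (by omega)]
  have hform : ∀ j, (wordApply σ)^[k + (h * p) * j] [c] =
      (List.replicate j ((wordApply σ)^[k] w)).flatten ++ ((wordApply σ)^[k] [c] ++
        (List.replicate j ((wordApply σ)^[k] w')).flatten) := by
    intro j
    induction j with
    | zero => simp
    | succ j ih =>
      rw [hstep, ih, List.replicate_succ, List.replicate_succ' (a := (wordApply σ)^[k] w')]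
      simp
  by_cases hy : (wordApply σ)^[k] w = []
  · refine ⟨c, (wordApply σ)^[k] w', ?_, fun j => ⟨k + h * p * j, (wordApply σ)^[k] [c], [], ?_⟩⟩
    · intro hz
      refine not_growing_of_iterate_eq (Nat.mul_pos hh hp) (k := k) ?_ hc
      have := hstep 0
      simpa [hy, hz] using this
    · rw [hform, hy]
      simp
  · exact ⟨c, _, hy, fun j => ⟨k + h * p * j, [], _, by rw [hform]; rfl⟩⟩

end GrowingLetters

/-! ### Subexponential growth -/

section Subexponential

open Filter Topology

lemma getElem?_flatten_replicate {C : Type*} (y : List C) (j i : ℕ)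
    (h : i + y.length < j * y.length) :
    (List.replicate j y).flatten[i + y.length]? = (List.replicate j y).flatten[i]? := by
  cases j with
  | zero => simp
  | succ j =>
    rw [add_mul, one_mul] at h
    conv_lhs => rw [List.replicate_succ, List.flatten_cons]
    conv_rhs => rw [List.replicate_succ', List.flatten_append]
    rw [List.getElem?_append_right (by omega), Nat.add_sub_cancel,
      List.getElem?_append_left (by simp; omega)]

lemma flatMap_flatten_replicate {C D : Type*} (f : C → List D) (y : List C) (j : ℕ) :
    (List.replicate j y).flatten.flatMap f = (List.replicate j (y.flatMap f)).flatten := by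
  induction j with
  | zero => simp
  | succ j ih => simp [List.replicate_succ, List.flatMap_append, ih]

/-- The word `u` is read off from a function on `ZMod P`. -/
def Fits {A : Type*} {P : ℕ} (f : ZMod P → A) (u : List A) : Prop :=
  ∀ t < u.length, u[t]? = some (f t)

/-- The length of a word modulo `P`, together with the set of all its `P`-periodic extensions. -/
def periodData {A : Type*} (P : ℕ) (u : List A) : ZMod P × Set (ZMod P → A) :=
  ((u.length : ZMod P), {f | Fits f u})

lemma fits_append {A : Type*} {P : ℕ} (f : ZMod P → A) (u v : List A) :
    Fits f (u ++ v) ↔ Fits f u ∧ Fits (fun t => f ((u.length : ZMod P) + t)) v := by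
  constructor
  · refine fun h => ⟨fun t ht => ?_, fun t ht => ?_⟩
    · rw [← h t (by simp; omega), List.getElem?_append_left ht]
    · have := h (u.length + t) (by simpa using ht)
      rw [List.getElem?_append_right (by omega), Nat.add_sub_cancel_left] at this
      rw [this]
      push_cast
      rfl
  · rintro ⟨h1, h2⟩ t ht
    by_cases htu : t < u.length
    · rw [List.getElem?_append_left htu, h1 t htu]
    · rw [List.getElem?_append_right (by omega), h2 _ (by simp at ht; omega)]
      congr 2
      change f ((u.length : ZMod P) + ((t - u.length : ℕ) : ZMod P)) = f t
      rw [← Nat.cast_add, Nat.add_sub_cancel' (by omega)]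

lemma periodData_append {A : Type*} {P : ℕ} {u u' v v' : List A}
    (hu : periodData P u = periodData P u') (hv : periodData P v = periodData P v') :
    periodData P (u ++ v) = periodData P (u' ++ v') := by
  simp only [periodData, Prod.mk.injEq, Set.ext_iff, Set.mem_ofPred_eq] at *
  refine ⟨by simp [hu.1, hv.1], fun f => ?_⟩
  rw [fits_append, fits_append, hu.2, hu.1, hv.2]

variable {A B : Type*} {σ : B → List B} {τ : B → List A} {x : ℕ → B} {a : ℕ → A}

lemma periodData_imageWord {P i j : ℕ}
    (h : ∀ c, periodData P (imageWord σ τ i [c]) = periodData P (imageWord σ τ j [c]))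
    (w : List B) : periodData P (imageWord σ τ i w) = periodData P (imageWord σ τ j w) := by
  induction w with
  | nil => simp
  | cons c w ih =>
    rw [imageWord_cons, imageWord_cons σ τ j]
    exact periodData_append (h c) ih

lemma exists_periodData [Finite A] [Finite B] (σ : B → List B) (τ : B → List A) {P : ℕ}
    (hP : 0 < P) : ∃ i h : ℕ, 1 ≤ h ∧ ∀ s (w : List B),
      periodData P (imageWord σ τ (i + h * s) w) = periodData P (imageWord σ τ i w) := by
  have : NeZero P := ⟨hP.ne'⟩
  obtain ⟨i, j, hij, heq⟩ : ∃ i j : ℕ, i < j ∧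
      (fun c => periodData P (imageWord σ τ i [c])) =
        fun c => periodData P (imageWord σ τ j [c]) := by
    obtain ⟨i, j, hne, heq⟩ := Finite.exists_ne_map_eq_of_infinite
      (fun (n : ℕ) (c : B) => periodData P (imageWord σ τ n [c]))
    rcases lt_or_gt_of_ne hne with h | h
    · exact ⟨i, j, h, heq⟩
    · exact ⟨j, i, h, heq.symm⟩
  refine ⟨i, j - i, by omega, fun s w => ?_⟩
  induction s with
  | zero => simp
  | succ s ih =>
    rw [← ih, mul_add, mul_one, show i + ((j - i) * s + (j - i)) = j + (j - i) * s by omega,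
      imageWord_add, imageWord_add]
    exact (periodData_imageWord (fun c => congrFun heq c) _).symm

lemma LocPer.fits {P s L : ℕ} (hP : 0 < P) (h : LocPer a s L P) {u : List A} {e : ℕ}
    (hs : s ≤ e) (he : e + u.length ≤ s + L) (hu : ∀ t < u.length, u[t]? = some (a (e + t))) :
    ∃ f : ZMod P → A, Fits f u := by
  have : NeZero P := ⟨hP.ne'⟩
  refine ⟨fun t => a (e + t.val), fun t ht => ?_⟩
  change u[t]? = some (a (e + (t : ZMod P).val))
  rw [hu t ht, ZMod.val_natCast]
  congr 1
  have h1 := h.iterate (t / P) (e + t % P) (by omega) (by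
    have := Nat.mod_add_div' t P
    omega)
  rw [← h1]
  congr 1
  have := Nat.mod_add_div' t P
  omega

lemma Fits.locPer {P : ℕ} {f : ZMod P → A} {u : List A} (h : Fits f u) {e : ℕ}
    (hu : ∀ t < u.length, u[t]? = some (a (e + t))) : LocPer a e u.length P := by
  intro v hv hv'
  obtain ⟨t, rfl⟩ := Nat.exists_eq_add_of_le hv
  have h1 := h t (by omega)
  have h2 := h (t + P) (by omega)
  rw [hu _ (by omega)] at h1 h2
  rw [add_assoc, Option.some.inj h1, Option.some.inj h2]
  simp

/-- Long periodic runs of an automatic sequence can be found near the origin, relative to their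
length. -/
lemma exists_runs_near [Fintype A] {q : ℕ} (hq : 2 ≤ q) (haut : IsQAutomatic q a) {P : ℕ}
    (h : ∀ L, ∃ s, LocPer a s L P) :
    ∃ C : ℕ, ∀ m, ∃ z ≤ C, LocPer a (q ^ m * z) (2 * q ^ m) P := by
  classical
  obtain ⟨T, ty, hty, -⟩ := exists_types hq haut
  have hrep : ∀ t, ∃ r, ∀ z, ty z = t → ty r = t := by
    intro t
    by_cases ht : ∃ z, ty z = t
    · obtain ⟨z, hz⟩ := ht
      exact ⟨z, fun _ _ => hz⟩
    · exact ⟨0, fun z hz => absurd ⟨z, hz⟩ ht⟩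
  choose rep hrep using hrep
  refine ⟨∑ t, rep t, fun m => ?_⟩
  obtain ⟨s, hs⟩ := h (3 * q ^ m)
  have hqm : 0 < q ^ m := by positivity
  set z := s / q ^ m + 1 with hz
  have hz1 : q ^ m * z = q ^ m * (s / q ^ m) + q ^ m := by rw [hz]; ring
  have hz2 := Nat.div_add_mod s (q ^ m)
  have hz3 := Nat.mod_lt s hqm
  generalize s % q ^ m = y at hz2 hz3
  have hloc : LocPer a (q ^ m * z) (2 * q ^ m) P := hs.mono (by omega) (by omega)
  have he : ty (rep (ty z)) = ty z := hrep _ z rfl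
  refine ⟨rep (ty z), Finset.single_le_sum (f := rep) (fun _ _ => Nat.zero_le _)
    (Finset.mem_univ _), fun v hv hv' => ?_⟩
  obtain ⟨t, rfl⟩ := Nat.exists_eq_add_of_le hv
  rw [add_assoc, hty _ _ he m _ (by omega), hty _ _ he m _ (by omega), ← add_assoc]
  exact hloc _ (by omega) (by omega)

variable (hlen : Tendsto (fun n => ((wordApply σ)^[n] [x 0]).length) atTop atTop)
  (hfix : ∀ n, (wordApply σ)^[n] [x 0] =
    (List.range ((wordApply σ)^[n] [x 0]).length).map x)
  (ha : ∀ m, ((List.range m).map x).flatMap τ =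
    (List.range (((List.range m).map x).flatMap τ).length).map a)
  (hτ : ∀ c, τ c ≠ [])

include hlen hτ in
lemma tendsto_length_imageWord :
    Tendsto (fun n => (imageWord σ τ n [x 0]).length) atTop atTop :=
  tendsto_atTop_mono (fun _ => length_le_flatMap hτ _) hlen

include hlen hfix ha hτ in
lemma exists_runs [Fintype B] (hocc : ∀ c, ∃ n, x n = c)
    (hs : ∃ c, Growing σ c ∧ ∀ n, growingCount σ ((wordApply σ)^[n] [c]) = 1) :
    ∃ P, 0 < P ∧ ∀ L, ∃ s, LocPer a s L P := by
  obtain ⟨c, y, hy, hpow⟩ := exists_powers hs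
  have hP : 0 < (y.flatMap τ).length :=
    (List.length_pos_iff.2 hy).trans_le (length_le_flatMap hτ y)
  refine ⟨(y.flatMap τ).length, hP, fun L => ?_⟩
  obtain ⟨n, u, v, hn⟩ := hpow L
  obtain ⟨k, rfl⟩ := hocc c
  set R := (List.replicate L (y.flatMap τ)).flatten with hR
  have hRlen : R.length = L * (y.flatMap τ).length := by simp [hR]
  have himg : imageWord σ τ n [x k] = u.flatMap τ ++ (R ++ v.flatMap τ) := by
    rw [imageWord, hn, List.flatMap_append, List.flatMap_append, flatMap_flatten_replicate]
  set s := ∑ l ∈ Finset.range k, (imageWord σ τ n [x l]).length + (u.flatMap τ).length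
  have hget : ∀ i < R.length, R[i]? = some (a (s + i)) := by
    intro i hi
    have h1 := getElem?_imageWord hlen hfix ha n k (i := (u.flatMap τ).length + i) (by
      rw [himg]; simp only [List.length_append]; omega)
    rw [himg, List.getElem?_append_right (by omega), Nat.add_sub_cancel_left,
      List.getElem?_append_left hi, ← add_assoc] at h1
    exact h1
  have hL : L ≤ R.length := by rw [hRlen]; exact Nat.le_mul_of_pos_right _ hP
  refine ⟨s, fun w hw hw' => ?_⟩
  obtain ⟨t, rfl⟩ := Nat.exists_eq_add_of_le hw
  have h1 := getElem?_flatten_replicate (y.flatMap τ) L t (by omega)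
  rw [← hR, hget _ (by omega), hget _ (by omega)] at h1
  rw [add_assoc]
  exact Option.some.inj h1

lemma tendsto_ratio_shift {G : ℕ → ℝ} (hG : ∀ n, 0 < G n)
    (hr : Tendsto (fun n => G (n + 1) / G n) atTop (𝓝 1)) (r : ℕ) :
    Tendsto (fun n => G (n + r) / G n) atTop (𝓝 1) := by
  induction r with
  | zero => simp [div_self (hG _).ne']
  | succ r ih =>
    have := (hr.comp (tendsto_add_atTop_nat r)).mul ih
    rw [one_mul] at this
    refine this.congr fun n => ?_
    simp only [Function.comp]
    rw [div_mul_div_cancel₀ (hG _).ne', add_assoc]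

/-- A sequence with ratio of consecutive terms tending to `1` does not grow exponentially. -/
lemma not_exponential {G : ℕ → ℝ} (hG : ∀ n, 0 < G n)
    (hr : Tendsto (fun n => G (n + 1) / G n) atTop (𝓝 1)) (N : ℕ)
    (h : ∀ k, (2 : ℝ) ^ k ≤ G (N * k)) : False := by
  obtain ⟨n0, hn0⟩ := eventually_atTop.1
    ((tendsto_ratio_shift hG hr N).eventually (gt_mem_nhds (show (1 : ℝ) < 3 / 2 by norm_num)))
  rcases Nat.eq_zero_or_pos N with rfl | hN
  · have hlim := tendsto_pow_atTop_atTop_of_one_lt (one_lt_two (α := ℝ))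
    obtain ⟨k, hk⟩ := (hlim.eventually_gt_atTop (G 0)).exists
    have := h k
    rw [zero_mul] at this
    linarith
  have hle : ∀ k, G (N * (n0 + k)) ≤ G (N * n0) * (3 / 2) ^ k := by
    intro k
    induction k with
    | zero => simp
    | succ k ih =>
      have h1 : n0 ≤ N * (n0 + k) := (Nat.le_add_right _ _).trans (Nat.le_mul_of_pos_left _ hN)
      have h2 := hn0 _ h1
      rw [div_lt_iff₀ (hG _)] at h2
      rw [← add_assoc, mul_add N, mul_one, pow_succ]
      linarith
  have hlim := tendsto_pow_atTop_atTop_of_one_lt (show (1 : ℝ) < 4 / 3 by norm_num)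
  obtain ⟨k, hk⟩ := (hlim.eventually_gt_atTop (G (N * n0))).exists
  have h1 := (h (n0 + k)).trans (hle k)
  rw [pow_add] at h1
  have h2 : (2 : ℝ) ^ k = (4 / 3) ^ k * (3 / 2) ^ k := by rw [← mul_pow]; norm_num
  rw [h2, ← mul_assoc] at h1
  have h3 := le_of_mul_le_mul_right h1 (by positivity)
  have h4 : (1 : ℝ) ≤ 2 ^ n0 := one_le_pow₀ one_le_two
  have h5 : (0 : ℝ) < (4 / 3) ^ k := by positivity
  nlinarith

/-- Some large values of a sequence whose consecutive ratios tend to `1`, together with a given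
number of subsequent indices, fit into a given scale of windows. -/
lemma exists_fit {q : ℕ} (hq : 2 ≤ q) {G : ℕ → ℕ} (hG : ∀ n, 0 < G n)
    (hGtop : Tendsto G atTop atTop)
    (hr : Tendsto (fun n => (G (n + 1) : ℝ) / G n) atTop (𝓝 1)) (i h r : ℕ) (hh : 1 ≤ h) (C : ℕ)
    {z : ℕ → ℕ} (hz : ∀ m, z m ≤ C) :
    ∃ m s, q ^ m * z m ≤ G (i + h * s) ∧ G (i + h * s + r) ≤ q ^ m * z m + 2 * q ^ m := by
  have hε : (1 : ℝ) < 1 + 1 / (C + 1) := by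
    have : (0 : ℝ) < 1 / (C + 1) := by positivity
    linarith
  obtain ⟨n1, hn1⟩ := eventually_atTop.1
    ((tendsto_ratio_shift (fun n => Nat.cast_pos.2 (hG n)) hr (h + r)).eventually (gt_mem_nhds hε))
  obtain ⟨m, hm⟩ := ((tendsto_pow_atTop_atTop_of_one_lt (show 1 < q by omega)).eventually_gt_atTop
    (G (i + h * n1))).exists
  set X := q ^ m * (z m + 1) with hX
  have hXm : q ^ m ≤ X := Nat.le_mul_of_pos_right _ (Nat.succ_pos _)
  have hex : ∃ s, n1 ≤ s ∧ X ≤ G (i + h * s) := by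
    have hlim : Tendsto (fun s => i + h * s) atTop atTop :=
      tendsto_atTop_mono (fun s => (Nat.le_mul_of_pos_left s hh).trans (Nat.le_add_left _ _))
        tendsto_id
    exact ((eventually_ge_atTop n1).and ((hGtop.comp hlim).eventually_ge_atTop X)).exists
  classical
  obtain ⟨hs1, hs2⟩ := Nat.find_spec hex
  have hmin := fun s' => Nat.find_min hex (m := s')
  set s := Nat.find hex
  have hne : s ≠ n1 := by
    intro he
    rw [he] at hs2
    omega
  have hprev := hmin (s - 1) (by omega)
  have hlt : G (i + h * (s - 1)) < X := by
    by_contra hge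
    exact hprev ⟨by omega, by omega⟩
  refine ⟨m, s, ?_, ?_⟩
  · have : q ^ m * z m ≤ X := Nat.mul_le_mul_left _ (Nat.le_succ _)
    omega
  · have h1 := hn1 (i + h * (s - 1))
      (by have := Nat.le_mul_of_pos_left (s - 1) hh; omega)
    have he : i + h * (s - 1) + (h + r) = i + h * s + r := by
      obtain ⟨s', hs'⟩ : ∃ s', s = s' + 1 := ⟨s - 1, by omega⟩
      rw [hs', Nat.add_sub_cancel]
      ring
    rw [he, div_lt_iff₀ (Nat.cast_pos.2 (hG _))] at h1
    have h2 : (G (i + h * s + r) : ℝ) ≤ (1 + 1 / (C + 1)) * X :=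
      h1.le.trans (mul_le_mul_of_nonneg_left (Nat.cast_le.2 hlt.le) (by linarith))
    have h3 : (X : ℝ) ≤ q ^ m * (C + 1) := by
      rw [hX]
      push_cast
      have : (z m : ℝ) ≤ C := Nat.cast_le.2 (hz m)
      gcongr
    have h4 : (1 / (C + 1) : ℝ) * X ≤ q ^ m := by
      rw [div_mul_eq_mul_div, one_mul, div_le_iff₀ (by positivity)]
      exact h3
    have h5 : (G (i + h * s + r) : ℝ) ≤ ((X + q ^ m : ℕ) : ℝ) := by
      push_cast
      linarith
    have h6 : G (i + h * s + r) ≤ X + q ^ m := Nat.cast_le.1 h5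
    rw [hX] at h6
    linarith

include hlen hfix ha hτ in
/-- If the lengths of the words `τ (σ ^ n (x 0))` have consecutive ratios tending to `1`, then an
automatic `a` is eventually periodic. -/
lemma eventuallyPeriodic_of_ratio_one [Fintype A] [Fintype B] (hocc : ∀ c, ∃ n, x n = c)
    {q : ℕ} (hq : 2 ≤ q) (haut : IsQAutomatic q a)
    (hr : Tendsto (fun n => ((imageWord σ τ (n + 1) [x 0]).length : ℝ) /
      (imageWord σ τ n [x 0]).length) atTop (𝓝 1)) :
    ∃ N P : ℕ, 0 < P ∧ ∀ n ≥ N, a (n + P) = a n := by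
  set G : ℕ → ℕ := fun n => (imageWord σ τ n [x 0]).length with hG
  have hGtop : Tendsto G atTop atTop := tendsto_length_imageWord hlen hτ
  have hne : ∀ n, (wordApply σ)^[n] [x 0] ≠ [] := by
    intro n hn
    obtain ⟨m, hm, hm'⟩ := ((hlen.eventually_ge_atTop 1).and (eventually_ge_atTop n)).exists
    rw [← Nat.sub_add_cancel hm', Function.iterate_add_apply, hn, iterate_nil] at hm
    simp at hm
  have hGpos : ∀ n, 0 < G n := fun n =>
    (List.length_pos_iff.2 (hne n)).trans_le (length_le_flatMap hτ _)
  have hGpos' : ∀ n, (0 : ℝ) < G n := fun n => Nat.cast_pos.2 (hGpos n)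
  have hx0 : Growing σ (x 0) := fun K => (hlen.eventually_gt_atTop K).exists
  have hs : ∃ c, Growing σ c ∧ ∀ n, growingCount σ ((wordApply σ)^[n] [c]) = 1 := by
    refine (exists_single_or_exponential σ).resolve_right ?_
    rintro ⟨N, hN⟩
    refine not_exponential hGpos' hr N fun k => ?_
    have := (hN _ hx0 k).trans (length_le_flatMap hτ _)
    exact_mod_cast this
  obtain ⟨P, hP, hruns⟩ := exists_runs hlen hfix ha hτ hocc hs
  obtain ⟨C, hC⟩ := exists_runs_near hq haut hruns
  choose z hz hloc using hC
  obtain ⟨i, h, hh, hdata⟩ := exists_periodData σ τ hP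
  have hV : ∀ r, ∃ V, (wordApply σ)^[r] [x 0] = [x 0] ++ V := by
    intro r
    have h1 := hfix r
    obtain ⟨l, hl⟩ : ∃ l, ((wordApply σ)^[r] [x 0]).length = 1 + l :=
      Nat.exists_eq_add_of_le (List.length_pos_iff.2 (hne r))
    rw [hl, List.range_add, List.map_append] at h1
    exact ⟨_, h1⟩
  have hseg : ∀ r, LocPer a (G i) (G (i + r) - G i) P := by
    intro r
    obtain ⟨V, hV⟩ := hV r
    have hsplit : ∀ j, imageWord σ τ (j + r) [x 0] = imageWord σ τ j [x 0] ++ imageWord σ τ j V :=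
      fun j => by rw [imageWord_add, hV, imageWord_append]
    have hget : ∀ j, ∀ t < (imageWord σ τ j V).length,
        (imageWord σ τ j V)[t]? = some (a (G j + t)) := by
      intro j t ht
      have h1 := imageWord_start hfix ha (j + r)
      rw [hsplit] at h1
      exact getElem?_of_append h1 ht
    have hGl : ∀ j, G (j + r) = G j + (imageWord σ τ j V).length := by
      intro j
      simp only [hG]
      rw [hsplit, List.length_append]
    obtain ⟨m, s, h1, h2⟩ := exists_fit hq hGpos hGtop hr i h r hh C hz
    rw [hGl] at h2
    obtain ⟨f, hf⟩ := (hloc m).fits hP h1 h2 (hget _)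
    have hf' : f ∈ (periodData P (imageWord σ τ (i + h * s) V)).2 := hf
    rw [hdata] at hf'
    have h3 := Fits.locPer hf' (hget i)
    rwa [hGl, Nat.add_sub_cancel_left]
  refine ⟨G i, P, hP, fun n hn => ?_⟩
  obtain ⟨j, hj, hj'⟩ := ((hGtop.eventually_gt_atTop (n + P)).and (eventually_ge_atTop i)).exists
  refine hseg (j - i) n hn ?_
  rw [show i + (j - i) = j by omega]
  omega

end Subexponential

/-! ### Scaled lengths and the proof of the theorem -/

section Final

open Filter Topology

lemma wordApply_iterate_singleton {B : Type*} (σ : B → List B) (h : ℕ) :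
    wordApply (fun c => (wordApply σ)^[h] [c]) = (wordApply σ)^[h] := by
  funext w
  induction w with
  | nil => simp [wordApply, iterate_nil]
  | cons c w ih =>
    rw [← List.singleton_append, iterate_append, ← ih]
    simp [wordApply]

lemma one_le_of_ratio {G : ℕ → ℝ} {β : ℝ} (hG : ∀ n, 0 < G n) (hGtop : Tendsto G atTop atTop)
    (hr : Tendsto (fun n => G (n + 1) / G n) atTop (𝓝 β)) : 1 ≤ β := by
  by_contra! hβ
  obtain ⟨n0, hn0⟩ := eventually_atTop.1 (hr.eventually (gt_mem_nhds hβ))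
  have hle : ∀ k, G (n0 + k) ≤ G n0 := by
    intro k
    induction k with
    | zero => simp
    | succ k ih =>
      have := hn0 (n0 + k) (Nat.le_add_right _ _)
      rw [div_lt_one (hG _)] at this
      exact this.le.trans ih
  obtain ⟨n, hn, hn'⟩ := ((hGtop.eventually_gt_atTop (G n0)).and (eventually_ge_atTop n0)).exists
  obtain ⟨k, rfl⟩ := Nat.exists_eq_add_of_le hn'
  exact absurd (hle k) (not_le.2 hn)

variable {A B : Type*} [Fintype B] {σ : B → List B} {τ : B → List A} {x : ℕ → B}
  {a : ℕ → A}

/-- If the lengths of the words `τ (σ ^ n (c))`, relative to that of `τ (σ ^ n (x 0))`, converge,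
and the consecutive ratios of the latter tend to `β`, which is at most `1` or multiplicatively
independent of `q`, then a `q`-automatic `a` is eventually periodic. -/
lemma eventuallyPeriodic_of_scaled [Fintype A]
    (hlen : Tendsto (fun n => ((wordApply σ)^[n] [x 0]).length) atTop atTop)
    (hfix : ∀ n, (wordApply σ)^[n] [x 0] =
      (List.range ((wordApply σ)^[n] [x 0]).length).map x)
    (ha : ∀ m, ((List.range m).map x).flatMap τ =
      (List.range (((List.range m).map x).flatMap τ).length).map a)
    (hτ : ∀ c, τ c ≠ []) (hocc : ∀ c, ∃ n, x n = c)
    {q : ℕ} (hq : 2 ≤ q) (haut : IsQAutomatic q a) {β : ℝ} {lam : B → ℝ}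
    (hlam : ∀ c, Tendsto (fun n => ((imageWord σ τ n [c]).length : ℝ) /
      (imageWord σ τ n [x 0]).length) atTop (𝓝 (lam c)))
    (hr : Tendsto (fun n => ((imageWord σ τ (n + 1) [x 0]).length : ℝ) /
      (imageWord σ τ n [x 0]).length) atTop (𝓝 β))
    (hβ : 1 < β → Irrational (Real.log β / Real.log q)) :
    ∃ N P : ℕ, 0 < P ∧ ∀ n ≥ N, a (n + P) = a n := by
  by_cases hβ1 : β = 1
  · rw [hβ1] at hr
    exact eventuallyPeriodic_of_ratio_one hlen hfix ha hτ hocc hq haut hr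
  have hGtopN := tendsto_length_imageWord hlen hτ
  have hGpos : ∀ n, 0 < (imageWord σ τ n [x 0]).length := by
    intro n
    have hne : (wordApply σ)^[n] [x 0] ≠ [] := by
      intro hn
      obtain ⟨m, hm, hm'⟩ := ((hlen.eventually_ge_atTop 1).and (eventually_ge_atTop n)).exists
      rw [← Nat.sub_add_cancel hm', Function.iterate_add_apply, hn, iterate_nil] at hm
      simp at hm
    exact (List.length_pos_iff.2 hne).trans_le (length_le_flatMap hτ _)
  have hGpos' : ∀ n, (0 : ℝ) < (imageWord σ τ n [x 0]).length := fun n => Nat.cast_pos.2 (hGpos n)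
  have hGtop : Tendsto (fun n => ((imageWord σ τ n [x 0]).length : ℝ)) atTop atTop :=
    tendsto_natCast_atTop_atTop.comp hGtopN
  have hβgt : 1 < β := lt_of_le_of_ne (one_le_of_ratio hGpos' hGtop hr) (Ne.symm hβ1)
  have hirr := hβ hβgt
  have hlam0 : ∀ c, 0 ≤ lam c := fun c => ge_of_tendsto' (hlam c) fun n => by positivity
  refine eventuallyPeriodic_of_geometric hq haut x (fun n c => (imageWord σ τ n [c]).length) ?_
    (zero_lt_one.trans hβgt) hirr hGpos' hGtop hr lam hlam ?_
  · intro n k k' hk i hi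
    have h1 := getElem?_imageWord hlen hfix ha n k hi
    rw [hk] at hi h1
    rw [getElem?_imageWord hlen hfix ha n k' hi] at h1
    exact (Option.some.inj h1).symm
  · have hpow : ∀ j, ∑ l ∈ Finset.range ((wordApply σ)^[j] [x 0]).length, lam (x l) = β ^ j := by
      intro j
      have h1 : Tendsto (fun n => ((imageWord σ τ (n + j) [x 0]).length : ℝ) /
          (imageWord σ τ n [x 0]).length) atTop
          (𝓝 (∑ l ∈ Finset.range ((wordApply σ)^[j] [x 0]).length, lam (x l))) := by
        refine (tendsto_finsetSum _ fun l _ => hlam (x l)).congr fun n => ?_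
        rw [← Finset.sum_div, ← Nat.cast_sum, sum_length_imageWord hfix]
      refine tendsto_nhds_unique h1 ?_
      clear h1
      induction j with
      | zero => simp [div_self (hGpos' _).ne']
      | succ j ih =>
        have h2 := (hr.comp (tendsto_add_atTop_nat j)).mul ih
        rw [pow_succ']
        refine h2.congr fun n => ?_
        simp only [Function.comp]
        rw [div_mul_div_cancel₀ (hGpos' _).ne', add_assoc]
    have hmono : Monotone fun k => ∑ l ∈ Finset.range k, lam (x l) := by
      refine monotone_nat_of_le_succ fun k => ?_
      rw [Finset.sum_range_succ]
      exact le_add_of_nonneg_right (hlam0 _)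
    refine tendsto_atTop_atTop_of_monotone hmono fun b => ?_
    obtain ⟨j, hj⟩ :=
      ((tendsto_pow_atTop_atTop_of_one_lt hβgt).eventually_ge_atTop b).exists
    exact ⟨_, (hj.trans (hpow j).ge)⟩

/-- Along an arithmetic progression of exponents, the lengths of the words `τ (σ ^ n (c))` converge
relative to that of `τ (σ ^ n (x 0))`. -/
lemma exists_scaled_lengths [DecidableEq B]
    (hlen : Tendsto (fun n => ((wordApply σ)^[n] [x 0]).length) atTop atTop)
    (hfix : ∀ n, (wordApply σ)^[n] [x 0] =
      (List.range ((wordApply σ)^[n] [x 0]).length).map x)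
    (hτ : ∀ c, τ c ≠ []) (hocc : ∀ c, ∃ n, x n = c)
    {M : Matrix B B ℕ} (hM : ∀ i j, M i j = (σ j).count i) {α : ℝ} (hα : 0 < α)
    (heig : (M.map (fun n : ℕ => (n : ℂ))).charpoly.IsRoot (α : ℂ))
    (hdom : ∀ μ : ℂ, (M.map (fun n : ℕ => (n : ℂ))).charpoly.IsRoot μ → ‖μ‖ ≤ α) :
    ∃ h ≥ 1, ∃ lam : B → ℝ,
      (∀ c, Tendsto (fun n => ((imageWord σ τ (h * n) [c]).length : ℝ) /
        (imageWord σ τ (h * n) [x 0]).length) atTop (𝓝 (lam c))) ∧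
      Tendsto (fun n => ((imageWord σ τ (h * (n + 1)) [x 0]).length : ℝ) /
        (imageWord σ τ (h * n) [x 0]).length) atTop (𝓝 (α ^ h)) := by
  have hT : (M.transpose.map (fun n : ℕ => (n : ℂ))).charpoly =
      (M.map (fun n : ℕ => (n : ℂ))).charpoly := by
    rw [Matrix.transpose_map, Matrix.charpoly_transpose]
  obtain ⟨d, h, hh, p, hp0, hpne, hp⟩ := exists_asymptotics M.transpose hα
    (by rw [hT]; exact heig) (by rw [hT]; exact hdom) (v := fun c => ((τ c).length : ℝ))
    (fun c => by exact_mod_cast List.length_pos_iff.2 (hτ c))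
  simp only [← length_imageWord_eq_pow hM] at hp
  have hpos : 0 < p (x 0) := by
    obtain ⟨c, hc⟩ := Function.ne_iff.1 hpne
    have hc' : 0 < p c := lt_of_le_of_ne (hp0 c) (Ne.symm hc)
    obtain ⟨k, rfl⟩ := hocc c
    obtain ⟨N, hN⟩ := (hlen.eventually_gt_atTop k).exists
    have hmem : x k ∈ (wordApply σ)^[N] [x 0] := by
      rw [hfix N]
      exact List.mem_map.2 ⟨k, List.mem_range.2 hN, rfl⟩
    set K := ∑ c, (imageWord σ τ N [c]).length with hK
    have hbd : ∀ w, (imageWord σ τ N w).length ≤ K * w.length := by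
      intro w
      induction w with
      | nil => simp
      | cons c w ih =>
        have h1 : (imageWord σ τ N [c]).length ≤ K :=
          Finset.single_le_sum (f := fun c => (imageWord σ τ N [c]).length)
            (fun _ _ => Nat.zero_le _) (Finset.mem_univ c)
        rw [imageWord_cons, List.length_append, List.length_cons, mul_add]
        omega
    have hle : ∀ n, (imageWord σ τ n [x k]).length ≤ K * (imageWord σ τ n [x 0]).length := by
      intro n
      have h1 : (imageWord σ τ n [x k]).length ≤ (imageWord σ τ (n + N) [x 0]).length := by
        obtain ⟨u, v, huv⟩ := List.append_of_mem hmem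
        rw [imageWord_add, huv, imageWord_append, imageWord_cons σ τ n (x k) v]
        simp only [List.length_append]
        omega
      rw [add_comm, imageWord_add] at h1
      exact h1.trans ((hbd _).trans (Nat.mul_le_mul_left _ (length_le_flatMap hτ _)))
    have hlim := (hp (x 0)).const_mul (K : ℝ)
    have h2 : p (x k) ≤ K * p (x 0) := by
      refine le_of_tendsto_of_tendsto' (hp (x k)) hlim fun n => ?_
      rw [← mul_div_assoc]
      refine div_le_div_of_nonneg_right ?_ (by positivity)
      exact_mod_cast hle (h * n)
    by_contra hneg
    have h3 : p (x 0) = 0 := le_antisymm (not_lt.1 hneg) (hp0 _)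
    rw [h3, mul_zero] at h2
    linarith
  have hhn : Tendsto (fun n => h * n) atTop atTop := tendsto_id.const_mul_atTop' hh
  have hden : ∀ᶠ n in atTop, (((h * n).choose d : ℝ) * α ^ (h * n)) ≠ 0 := by
    filter_upwards [hhn.eventually_ge_atTop d] with n hn
    have : 0 < (h * n).choose d := Nat.choose_pos hn
    positivity
  refine ⟨h, hh, fun c => p c / p (x 0), fun c => ?_, ?_⟩
  · refine ((hp c).div (hp (x 0)) hpos.ne').congr' ?_
    filter_upwards [hden] with n hn
    rw [Pi.div_apply, div_div_div_cancel_right₀ hn]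
  · have h1 := ((hp (x 0)).comp (tendsto_add_atTop_nat 1)).div (hp (x 0)) hpos.ne'
    have h2 := ((tendsto_choose_add_div_choose h d).comp hhn).mul_const (α ^ h)
    have h3 := h1.mul h2
    rw [div_self hpos.ne', one_mul, one_mul] at h3
    refine h3.congr' ?_
    filter_upwards [hden, (tendsto_add_atTop_nat 1).eventually hden] with n hn hn'
    simp only [Pi.div_apply, Function.comp]
    have hc : ((h * n).choose d : ℝ) ≠ 0 := left_ne_zero_of_mul hn
    have hc' : ((h * (n + 1)).choose d : ℝ) ≠ 0 := left_ne_zero_of_mul hn'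
    rw [show h * n + h = h * (n + 1) by ring]
    have hpw : α ^ (h * (n + 1)) = α ^ (h * n) * α ^ h := by rw [← pow_add]; congr 1
    rw [hpw]
    by_cases hz : ((imageWord σ τ (h * n) [x 0]).length : ℝ) = 0
    · simp [hz]
    · field_simp

lemma eq_map_range {C : Type*} {y : ℕ → C} {w : List C}
    (h : ∀ i, ∀ hi : i < w.length, w[i]'hi = y i) : w = (List.range w.length).map y :=
  List.ext_getElem (by simp) fun i h1 h2 => by simpa using h i h1

lemma irrational_log_div_log {q : ℕ} (hq : 2 ≤ q) {α : ℝ}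
    (hdep : ¬ ∃ s t : ℕ, 0 < s ∧ 0 < t ∧ α ^ s = (q : ℝ) ^ t) {h : ℕ} (hh : 1 ≤ h)
    (hβ : 1 < α ^ h) : Irrational (Real.log (α ^ h) / Real.log q) := by
  have hq1 : (1 : ℝ) < q := by exact_mod_cast hq
  have hlq : 0 < Real.log q := Real.log_pos hq1
  rintro ⟨r, hr⟩
  have hr0 : 0 < r := by
    have : (0 : ℝ) < r := by rw [hr]; exact div_pos (Real.log_pos hβ) hlq
    exact_mod_cast this
  obtain ⟨t, ht⟩ := Int.eq_ofNat_of_zero_le (Rat.num_pos.2 hr0).le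
  have ht0 : 0 < t := by
    have := Rat.num_pos.2 hr0
    omega
  refine hdep ⟨h * r.den, t, Nat.mul_pos hh r.den_pos, ht0, ?_⟩
  have hrt : (r : ℝ) = t / r.den := by
    rw [Rat.cast_def, ht]
    simp
  rw [hrt, div_eq_div_iff (by exact_mod_cast r.den_pos.ne') hlq.ne'] at hr
  rw [pow_mul]
  refine Real.log_injOn_pos (Set.mem_Ioi.2 (pow_pos (zero_lt_one.trans hβ) _))
    (Set.mem_Ioi.2 (pow_pos (zero_lt_one.trans hq1) _)) ?_
  rw [Real.log_pow (α ^ h) r.den, Real.log_pow (q : ℝ) t]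
  linarith

/-- The dominant eigenvalue is positive: otherwise all eigenvalues vanish, hence so does the trace,
whereas `x 0` occurs in its own image. -/
lemma dominant_pos [DecidableEq B] {M : Matrix B B ℕ} {α : ℝ}
    (hdom : ∀ μ : ℂ, (M.map (fun n : ℕ => (n : ℂ))).charpoly.IsRoot μ → ‖μ‖ ≤ α)
    {c : B} (hc : 0 < M c c) : 0 < α := by
  by_contra! hα
  have htr := Matrix.trace_eq_sum_roots_charpoly (M.map (fun n : ℕ => (n : ℂ)))
  rw [Multiset.sum_eq_zero] at htr
  · have h1 : ((M.trace : ℕ) : ℂ) = 0 := by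
      rw [← htr]
      simp [Matrix.trace]
    have h2 : M.trace = 0 := by exact_mod_cast h1
    have h3 : M c c ≤ M.trace :=
      Finset.single_le_sum (f := fun i => M i i) (fun _ _ => Nat.zero_le _) (Finset.mem_univ c)
    omega
  · intro μ hμ
    have := hdom μ (Polynomial.isRoot_of_mem_roots hμ)
    exact norm_le_zero_iff.1 (this.trans hα)

end Final

theorem durand_multiplicative_dependence
    {A B : Type*} [Fintype A] [Fintype B] [DecidableEq B]
    (σ : B → List B) (x : ℕ → B)
    (hstart : ∃ tail, σ (x 0) = x 0 :: tail)
    (hlen : Filter.Tendsto (fun n => ((wordApply σ)^[n] [x 0]).length)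
      Filter.atTop Filter.atTop)
    (hfix : ∀ n i : ℕ, ∀ hi : i < ((wordApply σ)^[n] [x 0]).length,
      ((wordApply σ)^[n] [x 0])[i]'hi = x i)
    (hocc : ∀ c : B, ∃ n, x n = c)
    (τ : B → List A) (hτ : ∀ c : B, τ c ≠ [])
    (a : ℕ → A)
    (ha : ∀ m i : ℕ, ∀ hi : i < (((List.range m).map x).flatMap τ).length,
      (((List.range m).map x).flatMap τ)[i]'hi = a i)
    (M : Matrix B B ℕ) (hM : ∀ i j, M i j = (σ j).count i)
    (α : ℝ)
    (heig : (M.map (fun n : ℕ => (n : ℂ))).charpoly.IsRoot (α : ℂ))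
    (hdom : ∀ μ : ℂ, (M.map (fun n : ℕ => (n : ℂ))).charpoly.IsRoot μ → ‖μ‖ ≤ α)
    (q : ℕ) (hq : 2 ≤ q) (haut : IsQAutomatic q a)
    (hnp : ¬ ∃ N P : ℕ, 0 < P ∧ ∀ n ≥ N, a (n + P) = a n) :
    ∃ s t : ℕ, 0 < s ∧ 0 < t ∧ α ^ s = (q : ℝ) ^ t := by
  by_contra hdep
  have hfix' := fun n => eq_map_range (hfix n)
  have ha' := fun m => eq_map_range (ha m)
  have hα : 0 < α := by
    obtain ⟨tail, ht⟩ := hstart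
    refine dominant_pos hdom (c := x 0) ?_
    rw [hM, ht, List.count_cons_self]
    omega
  obtain ⟨h, hh, lam, hlam, hr⟩ := exists_scaled_lengths hlen hfix' hτ hocc hM hα heig hdom
  -- Replace `σ` by its power `σ ^ h`.
  have hS : ∀ n, (wordApply fun c => (wordApply σ)^[h] [c])^[n] = (wordApply σ)^[h * n] := by
    intro n
    rw [wordApply_iterate_singleton, ← Function.iterate_mul]
  have hW : ∀ n w, imageWord (fun c => (wordApply σ)^[h] [c]) τ n w = imageWord σ τ (h * n) w :=
    fun n w => by rw [imageWord, imageWord, hS]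
  refine hnp (eventuallyPeriodic_of_scaled (σ := fun c => (wordApply σ)^[h] [c]) (β := α ^ h)
    (lam := lam) ?_ ?_ ha' hτ hocc hq haut ?_ ?_ (irrational_log_div_log hq hdep hh))
  · simp only [hS]
    exact hlen.comp (Filter.tendsto_id.const_mul_atTop' hh)
  · simp only [hS]
    exact fun n => hfix' _
  · simpa only [hW] using hlam
  · simpa only [hW] using hr
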